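/- arXiv:1312.4521 — 11 statements merged into one kernel-verified Lean document; each statement's English description precedes it below -/
import Mathlib

section
/- Let N, K be positive integers with K ≥ N, let M = lcm(K,N), P = gcd(N,K), J = N/P, L = K/P, and let v : ℤ → ℂ be finitely supported. Define the K×N polyphase multiplexer matrix of Laurent polynomials by [M(z)]_{l,k} = ∑_{n∈ℤ} v[l+nK]·exp(2πi k(l+nK)/N)·z^{−n} for 0 ≤ l ≤ K−1, 0 ≤ k ≤ N−1. Then M(z) = V(z)·F_N, where F_N is the N×N matrix [F_N]_{m,k} = exp(2πi mk/N), and V(z) is the K×N matrix whose entry at position (iP+r, jP+r), for i ∈ {0,…,L−1}, j ∈ {0,…,J−1}, r ∈ {0,…,P−1}, equals z^{−p}·V_{pK+iP+r}(z^J) where p = p(i,j), and all entries at positions (l,m) with l ≢ m (mod P) are zero. -/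
/-!
Fix `l`, `k`, `n`. The summation index `m` contributes to the `z^(-n)` coefficient of `V(z) F_N` exactly when
`m ≡ l + nK (mod N)`: writing `N = PJ`, `K = PL` with `J`, `L` coprime, this congruence splits into
`m ≡ l (mod P)` and `L (n - p) ≡ 0 (mod J)`, where `p = p(⌊l/P⌋, ⌊m/P⌋)` (`selected_iff`).
Hence a single `m` survives. For it, `M = JK` gives `pK + l + ((n - p)/J) M = l + nK`, and the two
exponentials agree because `exp(2πi k · / N)` is `N`-periodic (`exp_eq_of_dvd`).
-/

open Complex

/-- The support condition of the `(l, m)` entry of `V(z)` at `z^(-n)` is the congruence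
`m ≡ l + nK (mod N)` with `N = PJ`, `K = PL`. -/
lemma selected_iff {P J L l m n p : ℤ} (hP : 0 < P) (hc : IsCoprime J L)
    (hp : m / P ≡ p * L + l / P [ZMOD J]) :
    (l % P = m % P ∧ J ∣ n - p) ↔ P * J ∣ l + n * (P * L) - m := by
  have hl := Int.emod_add_mul_ediv l P
  have hm := Int.emod_add_mul_ediv m P
  obtain ⟨c, hcc⟩ := hp.dvd
  constructor
  · rintro ⟨h, d, hd⟩
    refine ⟨d * L + c, ?_⟩
    linear_combination h - hl + hm + P * L * hd + P * hcc
  · rintro ⟨d, hd⟩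
    have hmod : l % P = m % P := by
      apply Int.ModEq.symm
      apply Int.modEq_of_dvd
      exact ⟨J * d - n * L, by linear_combination hd⟩
    refine ⟨hmod, hc.dvd_of_dvd_mul_right (z := L) ⟨d - c, ?_⟩⟩
    have hP0 : P ≠ 0 := hP.ne'
    apply mul_left_cancel₀ hP0
    linear_combination hd - hmod + hl - hm - P * hcc

lemma exp_eq_of_dvd {N : ℕ} (hN : 0 < N) (k m : ℕ) (a : ℤ) (h : (N : ℤ) ∣ a - m) :
    Complex.exp (2 * Real.pi * Complex.I * (k : ℂ) * (a : ℂ) / N)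
      = Complex.exp (2 * Real.pi * Complex.I * (m : ℂ) * (k : ℂ) / N) := by
  obtain ⟨d, hd⟩ := h
  have hN0 : (N : ℂ) ≠ 0 := by exact_mod_cast hN.ne'
  have ha : (a : ℂ) = m + N * d := by
    have : a = m + N * d := by linarith
    rw [this]; push_cast; ring
  rw [Complex.exp_eq_exp_iff_exists_int]
  refine ⟨k * d, ?_⟩
  rw [ha]
  push_cast
  field_simp

/-- Polyphase representation of the OFDM multiplexer:
`M(z) = V(z) · F_N`, stated coefficientwise.  A Laurent polynomial
`∑ c n · z^(-n)` is represented by its coefficient function `n ↦ c n`.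
The `(l,k)` entry of the multiplexer polyphase matrix `M(z)` has coefficient
`v (l + nK) · exp(2πi k (l+nK)/N)` at `z^(-n)`; the matrix `V(z)` has entry
`z^(-p) V_{pK+iP+r}(z^J)` at position `(iP+r, jP+r)` (with `p = p(i,j)`)
and zero entries elsewhere, and `F_N` is the `N`-point DFT matrix. -/
theorem stmt0
    (N K P J L M : ℕ) (hN : 0 < N) (hNK : N ≤ K)
    (hP : P = Nat.gcd N K) (hJ : J = N / P) (hL : L = K / P) (hM : M = Nat.lcm K N)
    (v : ℤ → ℂ) (hv : (Function.support v).Finite)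
    (p : ℤ → ℤ → ℤ)
    (hp : ∀ i j : ℤ, 0 ≤ p i j ∧ p i j < (J : ℤ) ∧ j ≡ p i j * (L : ℤ) + i [ZMOD (J : ℤ)]) :
    ∀ (l : Fin K) (k : Fin N) (n : ℤ),
      -- coefficient of `z^(-n)` in `[M(z)]_{l,k}`
      v ((l : ℤ) + n * K) *
          Complex.exp (2 * Real.pi * Complex.I * ((k : ℕ) : ℂ) * (((l : ℤ) + n * K : ℤ) : ℂ) / N)
        =
      -- coefficient of `z^(-n)` in `[V(z) · F_N]_{l,k}`
      ∑ m : Fin N,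
        (if ((l : ℤ) % P = (m : ℤ) % P) then
            (if (J : ℤ) ∣ (n - p ((l : ℤ) / P) ((m : ℤ) / P)) then
              v (p ((l : ℤ) / P) ((m : ℤ) / P) * K + (l : ℤ)
                  + ((n - p ((l : ℤ) / P) ((m : ℤ) / P)) / J) * M)
            else 0)
          else 0)
        * Complex.exp (2 * Real.pi * Complex.I * ((m : ℕ) : ℂ) * ((k : ℕ) : ℂ) / N) := by
  intro l k n
  have hPpos : 0 < P := hP ▸ Nat.gcd_pos_of_pos_left K hN
  have hNe : N = P * J := by
    rw [hJ, Nat.mul_div_cancel' (hP ▸ Nat.gcd_dvd_left N K)]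
  have hKe : K = P * L := by
    rw [hL, Nat.mul_div_cancel' (hP ▸ Nat.gcd_dvd_right N K)]
  have hcop : Nat.Coprime J L := by
    rw [hJ, hL, hP]
    exact Nat.coprime_div_gcd_div_gcd (hP ▸ hPpos)
  have hMe : M = J * K := by
    apply Nat.eq_of_mul_eq_mul_left hPpos
    have h := Nat.gcd_mul_lcm K N
    rw [Nat.gcd_comm, ← hP, ← hM] at h
    rw [h]
    nth_rewrite 1 [hNe]
    ring
  have hNz : (N : ℤ) = P * J := by exact_mod_cast hNe
  have hKz : (K : ℤ) = P * L := by exact_mod_cast hKe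
  have hMz : (M : ℤ) = J * K := by exact_mod_cast hMe
  have hNpos : (0 : ℤ) < N := by exact_mod_cast hN
  have key : ∀ m : Fin N, ((l : ℤ) % P = (m : ℤ) % P ∧
      (J : ℤ) ∣ (n - p ((l : ℤ) / P) ((m : ℤ) / P))) ↔ (N : ℤ) ∣ (l : ℤ) + n * K - (m : ℤ) := by
    intro m
    rw [hNz, hKz]
    exact selected_iff (by exact_mod_cast hPpos) (Nat.isCoprime_iff_coprime.mpr hcop)
      (hp _ _).2.2
  -- the only surviving index is the residue of `l + nK` modulo `N`
  have hr0 := Int.emod_nonneg ((l : ℤ) + n * K) hNpos.ne'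
  have hr1 := Int.emod_lt_of_pos ((l : ℤ) + n * K) hNpos
  obtain ⟨r, hr⟩ := Int.eq_ofNat_of_zero_le hr0
  let m₀ : Fin N := ⟨r, by omega⟩
  have hm₀ : (N : ℤ) ∣ (l : ℤ) + n * K - (m₀ : ℤ) := by
    change (N : ℤ) ∣ (l : ℤ) + n * K - (r : ℤ)
    rw [← hr]
    exact Int.dvd_self_sub_emod
  rw [Finset.sum_eq_single m₀]
  · obtain ⟨h1, h2⟩ := (key m₀).mpr hm₀
    rw [if_pos h1, if_pos h2, exp_eq_of_dvd hN (k : ℕ) (m₀ : ℕ) _ hm₀]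
    congr 2
    rw [hMz]
    linear_combination (-(K : ℤ)) * Int.ediv_mul_cancel h2
  · intro m _ hne
    have hnot : ¬ (N : ℤ) ∣ (l : ℤ) + n * K - (m : ℤ) := by
      intro hd
      apply hne
      have hdiff := dvd_sub hm₀ hd
      rw [sub_sub_sub_cancel_left] at hdiff
      have h0 := Int.eq_zero_of_abs_lt_dvd hdiff (by
        have := m.isLt
        have := m₀.isLt
        rw [abs_lt]; omega)
      apply Fin.ext
      omega
    rw [← key m] at hnot
    rw [← ite_and, if_neg hnot, zero_mul]
  · intro h
    exact absurd (Finset.mem_univ _) h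
end

section
/- Let N, K be positive integers, P = gcd(N,K), J = N/P. For integers l ∈ {0,…,K−1} and m ∈ {0,…,N−1}, there exist an integer q and an integer p with 0 ≤ p ≤ J−1 such that qN + m = pK + l if and only if m ≡ l (mod P). -/
/-! Any value `q * N + m = p * K + l` forces `m ≡ l` modulo every common divisor of `N` and `K`.
Conversely, Bézout writes `m - l` as an integer combination of `N` and `K`; since `J * K` is a
multiple of `N`, the coefficient of `K` may be reduced modulo `J` at the expense of that of `N`. -/

/-- For positive integers `N, K` with `P = gcd(N,K)` and `J = N/P`,
and integers `l ∈ {0,…,K−1}`, `m ∈ {0,…,N−1}`: there exist an integer `q` and an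
integer `p` with `0 ≤ p ≤ J−1` such that `qN + m = pK + l` if and only if
`m ≡ l (mod P)`. -/
theorem stmt2
    (N K P J : ℕ) (hN : 0 < N) (hK : 0 < K)
    (hP : P = Nat.gcd N K) (hJ : J = N / P)
    (l m : ℤ) (hl0 : 0 ≤ l) (hlK : l ≤ (K : ℤ) - 1) (hm0 : 0 ≤ m) (hmN : m ≤ (N : ℤ) - 1) :
    (∃ q p : ℤ, 0 ≤ p ∧ p ≤ (J : ℤ) - 1 ∧ q * N + m = p * K + l) ↔
      m ≡ l [ZMOD (P : ℤ)] := by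
  obtain ⟨k, hk⟩ : P ∣ K := hP ▸ Nat.gcd_dvd_right N K
  have hNJ : N = P * J := by
    rw [hJ, Nat.mul_div_cancel' (hP ▸ Nat.gcd_dvd_left N K)]
  have hJpos : 0 < J := Nat.pos_of_mul_pos_left (hNJ ▸ hN)
  have hNZ : (N : ℤ) = P * J := by exact_mod_cast hNJ
  have hKZ : (K : ℤ) = P * k := by exact_mod_cast hk
  rw [Int.modEq_iff_dvd]
  constructor
  · rintro ⟨q, p, -, -, h⟩
    refine ⟨q * J - p * k, ?_⟩
    rw [hNZ, hKZ] at h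
    linear_combination -h
  · rintro ⟨c, hc⟩
    have hbez : (P : ℤ) = N * Nat.gcdA N K + K * Nat.gcdB N K := by
      rw [hP]
      exact Nat.gcd_eq_gcd_ab N K
    set x := Nat.gcdA N K
    set y := Nat.gcdB N K
    have hJ0 : (0 : ℤ) < J := by exact_mod_cast hJpos
    have hdiv := Int.emod_add_mul_ediv (-(y * c)) J
    set t := -(y * c) / (J : ℤ)
    -- `K * J = N * k`, so the quotient `t` moves from the coefficient of `K` to that of `N`.
    have hKJ : (K : ℤ) * J = N * k := by
      rw [hNZ, hKZ]
      ring
    refine ⟨x * c - k * t, -(y * c) % J, Int.emod_nonneg _ hJ0.ne',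
      Int.le_sub_one_of_lt (Int.emod_lt_of_pos _ hJ0), ?_⟩
    linear_combination (-(K : ℤ)) * hdiv + t * hKJ - hc - c * hbez
end

section
/- Let J, L be positive integers with gcd(J,L) = 1, and for integers i, j let p(i,j) denote the unique integer in {0,…,J−1} with j ≡ p(i,j)·L + i (mod J). Then for all i ∈ {0,…,L−1} and j ∈ {0,…,J−1}, the quantity p(i,0) + p(0,j) − p(i,j) is a multiple of J and belongs to {0, J}. -/
/-!
Modulo `J`, `p i j` is `(j - i) / L`, which is additive in `(i, j)`; hence
`p i 0 + p 0 j - p i j` is divisible by `J`. The bounds `0 ≤ p ≤ J - 1` place this quantity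
strictly between `-J` and `2 * J`, where the only multiples of `J` are `0` and `J`.
-/

/-- Let `J, L` be coprime positive integers and for integers `i, j`
let `p i j` denote the unique integer in `{0,…,J−1}` with `j ≡ p i j · L + i (mod J)`.
Then for all `i ∈ {0,…,L−1}` and `j ∈ {0,…,J−1}`, the quantity
`p i 0 + p 0 j − p i j` is a multiple of `J` and belongs to `{0, J}`. -/
theorem stmt4
    (J L : ℕ) (hJ : 0 < J) (hL : 0 < L) (hcop : Nat.gcd J L = 1)
    (p : ℤ → ℤ → ℤ)
    (hp : ∀ i j : ℤ, 0 ≤ p i j ∧ p i j ≤ (J : ℤ) - 1 ∧ j ≡ p i j * L + i [ZMOD (J : ℤ)]) :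
    ∀ i j : ℤ, 0 ≤ i → i ≤ (L : ℤ) - 1 → 0 ≤ j → j ≤ (J : ℤ) - 1 →
      (J : ℤ) ∣ (p i 0 + p 0 j - p i j) ∧
        (p i 0 + p 0 j - p i j = 0 ∨ p i 0 + p 0 j - p i j = (J : ℤ)) := by
  intro i j _ _ _ _
  obtain ⟨a0, a1, ha⟩ := hp i 0
  obtain ⟨b0, b1, hb⟩ := hp 0 j
  obtain ⟨c0, c1, hc⟩ := hp i j
  -- Adding the first two congruences and subtracting the third cancels `i` and `j`;
  -- `L` is then cancelled because it is invertible modulo `J`.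
  have hdvd : (J : ℤ) ∣ p i 0 + p 0 j - p i j := by
    have h : (J : ℤ) ∣ (p i 0 + p 0 j - p i j) * L := by
      have h := dvd_sub (dvd_add ha.dvd hb.dvd) hc.dvd
      ring_nf at h ⊢
      exact h
    exact (Nat.isCoprime_iff_coprime.mpr hcop).dvd_of_dvd_mul_right h
  refine ⟨hdvd, ?_⟩
  obtain ⟨k, hk⟩ := hdvd
  have hJ' : (0 : ℤ) < J := by exact_mod_cast hJ
  -- The quantity `J * k` lies strictly between `-J` and `2 * J`, so `k` is `0` or `1`.
  have hk0 : -1 < k := by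
    by_contra! hle
    nlinarith
  have hk1 : k < 2 := by
    by_contra! hle
    nlinarith
  obtain rfl | rfl : k = 0 ∨ k = 1 := by omega
  · left; simpa using hk
  · right; simpa using hk
end

section
/- Let N, K be positive integers with K ≥ N, and let v : ℤ → ℂ be finitely supported. The Weyl–Heisenberg set Φ = {φ_{k,i}} with φ_{k,i}[n] = v[n−iK]·exp(2πi k(n−iK)/N), k ∈ {0,…,N−1}, i ∈ ℤ, is orthonormal if and only if for every r ∈ {0,…,P−1} the L×J Laurent-polynomial matrix V_r^o(z), defined by [V_r^o(z)]_{i,j} = z^{n(i,j)}·V_{p(i,j)K+iP+r}(z) with n(i,j) = (p(i,0)+p(0,j)−p(i,j))/J ∈ {0,1}, is paraunitary with constant 1/N, i.e. Ṽ_r^o(z)·V_r^o(z) = (1/N)·I_J, where Ṽ_r^o(z) is obtained from V_r^o(z) by transposing, conjugating all coefficients, and substituting z⁻¹ for z. -/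
/-!
Both sides are equivalent to one condition on the subsampled correlations
`A(a,b) = ∑ₛ conj v[sN+a] · v[sN+a+bK]`, namely `A(a,b) = δ[b]/N` for all integers `a, b`.

*Orthonormality.* After the shift `n ↦ n + iK`, and with `b = i - j`, the inner product of `φ_{k,i}`
and `φ_{l,j}` is a unimodular factor times `∑ₙ conj v[n] v[n+bK] ζ^{(l-k)n}`, `ζ = exp(2πi/N)`.
Splitting `n` by residue modulo `N` turns this into the length-`N` discrete Fourier transform of
`a ↦ A(a,b)` at `l - k`, and the Fourier transform is inverted by orthogonality of characters
(`sum_zeta_zpow`, `forall_fiber_iff`, `orthonormal_iff`).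

*Paraunitarity.* Since `J` and `L` are coprime, `n(i,j)` is an exact quotient, so the argument
`p(i,j)K + iP + r + (m + n(i,j))M` equals `(p(i,0)K + iP + mM) + r + p(0,j)K`. As `(i,m)` runs over
`{0,…,L-1} × ℤ`, the bracket runs bijectively over the multiples of `N` (`sum_rows_eq`). Hence the
coefficient of `z^{-t}` in the `(j,j')` entry is `A(r + p(0,j)K, p(0,j') - p(0,j) + tJ)`. The first
argument meets every class modulo `N`, and for fixed `j` the second argument meets every integer
exactly once.
-/

open Complex

namespace WeylHeisenberg

/-- The correlation `A(a,b) = ∑ₛ conj v[sN+a] · v[sN+a+bK]` of `v` subsampled by `N`. -/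
noncomputable def corr (N K : ℕ) (v : ℤ → ℂ) (a b : ℤ) : ℂ :=
  ∑' s : ℤ, (starRingEnd ℂ) (v (s * N + a)) * v (s * N + a + b * K)

theorem corr_add_mul (N K : ℕ) (v : ℤ → ℂ) (a b c : ℤ) :
    corr N K v (a + c * N) b = corr N K v a b := by
  unfold corr
  rw [← (Equiv.addRight c).tsum_eq
    (fun s : ℤ => (starRingEnd ℂ) (v (s * N + a)) * v (s * N + a + b * K))]
  refine tsum_congr fun s => ?_
  have : s * (N : ℤ) + (a + c * N) = (s + c) * N + a := by ring
  simp only [Equiv.coe_addRight, this]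

theorem sum_zeta_zpow {N : ℕ} {ζ : ℂ} (hζ : IsPrimitiveRoot ζ N) (d : ℤ) :
    ∑ l ∈ Finset.range N, ζ ^ ((l : ℤ) * d) = if (N : ℤ) ∣ d then (N : ℂ) else 0 := by
  have h1 : ∀ l : ℕ, ζ ^ ((l : ℤ) * d) = (ζ ^ d) ^ l := by
    intro l
    rw [mul_comm, zpow_mul, zpow_natCast]
  simp only [h1]
  split_ifs with h
  · rw [(hζ.zpow_eq_one_iff_dvd d).2 h]; simp
  · have hne : ζ ^ d ≠ 1 := fun h' => h ((hζ.zpow_eq_one_iff_dvd d).1 h')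
    have hpow : (ζ ^ d) ^ N = 1 := by
      rw [← zpow_natCast, ← zpow_mul]
      exact (hζ.zpow_eq_one_iff_dvd _).2 (dvd_mul_left _ _)
    rw [geom_sum_eq hne, hpow]; simp

/-- The Fourier transform of `f` at a character of `ℤ/N` only sees the sums of `f` over residue
classes. -/
theorem tsum_zeta_eq {N : ℕ} (hN : 0 < N) {ζ : ℂ} (hζ : IsPrimitiveRoot ζ N)
    {f : ℤ → ℂ} (hf : (Function.support f).Finite) (l : ℤ) :
    ∑' n : ℤ, f n * ζ ^ (l * n) =
      ∑ a ∈ Finset.range N, ζ ^ ((a : ℤ) * l) * ∑' s : ℤ, f (s * N + a) := by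
  have : NeZero N := ⟨hN.ne'⟩
  have hg : (Function.support fun n : ℤ => f n * ζ ^ (l * n)).Finite :=
    hf.subset fun n hn => by
      simp only [Function.mem_support] at hn ⊢
      exact left_ne_zero_of_mul hn
  obtain ⟨e, he⟩ : ∃ e : Fin N × ℤ ≃ ℤ, ∀ a s, e (a, s) = s * N + ((a : ℕ) : ℤ) :=
    ⟨(Equiv.prodComm _ _).trans (Int.divModEquiv N).symm, fun a s => by simp [Int.divModEquiv]⟩
  rw [← e.tsum_eq]
  have hsum : Summable fun x => f (e x) * ζ ^ (l * e x) :=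
    e.summable_iff.2 (summable_of_hasFiniteSupport hg)
  rw [hsum.tsum_prod, tsum_fintype, ← Fin.sum_univ_eq_sum_range
    (fun a : ℕ => ζ ^ ((a : ℤ) * l) * ∑' s : ℤ, f (s * N + a))]
  refine Finset.sum_congr rfl fun a _ => ?_
  rw [← tsum_mul_left]
  refine tsum_congr fun s => ?_
  have hz : ζ ≠ 0 := hζ.ne_zero hN.ne'
  have h1 : ζ ^ ((N : ℤ) * (l * s)) = 1 := (hζ.zpow_eq_one_iff_dvd _).2 (dvd_mul_right _ _)
  have h2 : l * (s * (N : ℤ) + ((a : ℕ) : ℤ)) = N * (l * s) + ((a : ℕ) : ℤ) * l := by ring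
  rw [he, h2, zpow_add₀ hz, h1]; ring

/-- Fourier inversion on `ℤ/N`: the transform is `c` at the trivial character and `0` elsewhere
exactly when all residue-class sums equal `c/N`. -/
theorem forall_fiber_iff {N : ℕ} (hN : 0 < N) {ζ : ℂ} (hζ : IsPrimitiveRoot ζ N)
    {f : ℤ → ℂ} (hf : (Function.support f).Finite) (c : ℂ) :
    (∀ l : ℤ, ∑' n : ℤ, f n * ζ ^ (l * n) = if (N : ℤ) ∣ l then c else 0) ↔
      ∀ a ∈ Finset.range N, ∑' s : ℤ, f (s * N + a) = c / N := by
  have hN0 : (N : ℂ) ≠ 0 := by exact_mod_cast hN.ne'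
  have hz : ζ ≠ 0 := hζ.ne_zero hN.ne'
  simp only [tsum_zeta_eq hN hζ hf]
  set A : ℕ → ℂ := fun a => ∑' s : ℤ, f (s * N + a) with hA
  constructor
  · intro h a₀ ha₀
    have key : ∑ l ∈ Finset.range N, ζ ^ (-((l : ℤ) * a₀)) *
        (∑ a ∈ Finset.range N, ζ ^ ((a : ℤ) * l) * A a) = N * A a₀ := by
      simp only [Finset.mul_sum]
      rw [Finset.sum_comm]
      have : ∀ a ∈ Finset.range N, ∑ l ∈ Finset.range N,
          ζ ^ (-((l : ℤ) * a₀)) * (ζ ^ ((a : ℤ) * l) * A a) = if a = a₀ then N * A a₀ else 0 := by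
        intro a ha
        have h1 : ∀ l : ℕ, ζ ^ (-((l : ℤ) * a₀)) * (ζ ^ ((a : ℤ) * l) * A a) =
            ζ ^ ((l : ℤ) * ((a : ℤ) - a₀)) * A a := by
          intro l
          rw [← mul_assoc, ← zpow_add₀ hz]
          congr 2; ring
        simp only [h1]
        rw [← Finset.sum_mul, sum_zeta_zpow hζ]
        rw [Finset.mem_range] at ha ha₀
        by_cases haa : a = a₀
        · subst haa; simp
        · have hnd : ¬ (N : ℤ) ∣ (a : ℤ) - a₀ := by
            intro hd
            have := Int.eq_zero_of_abs_lt_dvd hd (by rw [abs_lt]; constructor <;> omega)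
            omega
          simp [hnd, haa]
      rw [Finset.sum_congr rfl this, Finset.sum_ite_eq' , if_pos ha₀]
    have key2 : ∑ l ∈ Finset.range N, ζ ^ (-((l : ℤ) * a₀)) *
        (∑ a ∈ Finset.range N, ζ ^ ((a : ℤ) * l) * A a) = c := by
      rw [Finset.sum_eq_single 0]
      · rw [h]; simp
      · intro l hl hl0
        have hnd : ¬ (N : ℤ) ∣ (l : ℤ) := by
          rw [Finset.mem_range] at hl
          intro hd
          have := Nat.le_of_dvd (by omega) (Int.natCast_dvd_natCast.1 hd)
          omega
        rw [h, if_neg hnd, mul_zero]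
      · intro h0; exact absurd (Finset.mem_range.2 hN) h0
    change A a₀ = c / N
    rw [eq_div_iff hN0, mul_comm, ← key, key2]
  · intro h l
    have : ∀ a ∈ Finset.range N, ζ ^ ((a : ℤ) * l) * A a = ζ ^ ((a : ℤ) * l) * (c / N) :=
      fun a ha => by rw [← h a ha]
    rw [Finset.sum_congr rfl this, ← Finset.sum_mul, sum_zeta_zpow hζ]
    split_ifs
    · field_simp
    · simp

theorem finite_support_corr {v : ℤ → ℂ} (hv : (Function.support v).Finite) (g : ℤ → ℂ) :
    (Function.support fun n => (starRingEnd ℂ) (v n) * g n).Finite :=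
  hv.subset fun n hn => by
    simp only [Function.mem_support] at hn ⊢
    intro h; simp [h] at hn

/-- Each inner product of the Weyl–Heisenberg set is a phase times a Fourier transform of
`n ↦ conj v[n] · v[n+bK]`, with `b = i - j`. -/
theorem inner_eq {N K : ℕ} {ζ : ℂ} (hζdef : ζ = Complex.exp (2 * Real.pi * Complex.I / N))
    (v : ℤ → ℂ) (k l : ℕ) (i j : ℤ) :
    (∑' n : ℤ,
      (starRingEnd ℂ)
          (v (n - i * K) *
            Complex.exp (2 * Real.pi * Complex.I * (k : ℂ) * ((n - i * (K : ℤ) : ℤ) : ℂ) / N)) *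
        (v (n - j * K) *
          Complex.exp (2 * Real.pi * Complex.I * (l : ℂ) * ((n - j * (K : ℤ) : ℤ) : ℂ) / N))) =
    ζ ^ ((l : ℤ) * ((i - j) * K)) * ∑' n : ℤ,
      ((starRingEnd ℂ) (v n) * v (n + (i - j) * K)) * ζ ^ (((l : ℤ) - k) * n) := by
  have hz : ζ ≠ 0 := hζdef ▸ Complex.exp_ne_zero _
  have hexp : ∀ (k : ℕ) (n : ℤ),
      Complex.exp (2 * Real.pi * Complex.I * (k : ℂ) * (n : ℂ) / N) = ζ ^ ((k : ℤ) * n) := by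
    intro k n
    rw [hζdef, ← Complex.exp_int_mul]
    congr 1; push_cast; ring
  have hconj : (starRingEnd ℂ) ζ = ζ⁻¹ := by
    rw [hζdef, ← Complex.exp_conj, ← Complex.exp_neg]
    congr 1
    simp [neg_div, Complex.conj_ofNat]
  rw [← (Equiv.addRight (i * (K : ℤ))).tsum_eq, ← tsum_mul_left]
  refine tsum_congr fun n => ?_
  simp only [Equiv.coe_addRight]
  rw [hexp, hexp, map_mul, map_zpow₀, hconj, inv_zpow', add_sub_cancel_right,
    show n + i * (K : ℤ) - j * K = n + (i - j) * K by ring]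
  have h3 : ζ ^ (-((k : ℤ) * n)) * ζ ^ ((l : ℤ) * (n + (i - j) * K)) =
      ζ ^ ((l : ℤ) * ((i - j) * K)) * ζ ^ (((l : ℤ) - k) * n) := by
    rw [← zpow_add₀ hz, ← zpow_add₀ hz]; congr 1; ring
  linear_combination ((starRingEnd ℂ) (v n) * v (n + (i - j) * K)) * h3

theorem orthonormal_iff {N : ℕ} (K : ℕ) (hN : 0 < N) {v : ℤ → ℂ}
    (hv : (Function.support v).Finite) :
    (∀ (k l : Fin N) (i j : ℤ),
        ∑' n : ℤ,
          (starRingEnd ℂ)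
              (v (n - i * K) *
                Complex.exp (2 * Real.pi * Complex.I * ((k : ℕ) : ℂ) * ((n - i * (K : ℤ) : ℤ) : ℂ) / N)) *
            (v (n - j * K) *
              Complex.exp (2 * Real.pi * Complex.I * ((l : ℕ) : ℂ) * ((n - j * (K : ℤ) : ℤ) : ℂ) / N))
          = if k = l ∧ i = j then 1 else 0) ↔
    ∀ a b : ℤ, corr N K v a b = if b = 0 then 1 / (N : ℂ) else 0 := by
  obtain ⟨ζ, hζdef⟩ : ∃ ζ, ζ = Complex.exp (2 * Real.pi * Complex.I / N) := ⟨_, rfl⟩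
  have hζ : IsPrimitiveRoot ζ N := hζdef ▸ Complex.isPrimitiveRoot_exp N hN.ne'
  have hz : ζ ≠ 0 := hζ.ne_zero hN.ne'
  simp only [inner_eq hζdef]
  have hfib : ∀ b : ℤ, (∀ l : ℤ, ∑' n : ℤ,
      ((starRingEnd ℂ) (v n) * v (n + b * K)) * ζ ^ (l * n) =
        if (N : ℤ) ∣ l then (if b = 0 then (1 : ℂ) else 0) else 0) ↔
      ∀ a ∈ Finset.range N, corr N K v a b = (if b = 0 then (1 : ℂ) else 0) / N := fun b =>
    forall_fiber_iff hN hζ (finite_support_corr hv fun n => v (n + b * K)) _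
  constructor
  · intro h a b
    have hb := (hfib b).1 ?_ (a % N).toNat ?_
    · have hpos : 0 ≤ a % (N : ℤ) := Int.emod_nonneg _ (by omega)
      have ha : a = ((a % N).toNat : ℤ) + (a / N) * N := by
        rw [Int.toNat_of_nonneg hpos]
        have := Int.emod_add_mul_ediv a N
        linarith
      rw [ha, corr_add_mul, hb]
      split_ifs <;> simp
    · intro l
      -- The transform is `N`-periodic in `l`, so `l` may be reduced modulo `N`.
      have hlpos : 0 ≤ l % (N : ℤ) := Int.emod_nonneg _ (by omega)
      have hllt : l % (N : ℤ) < N := Int.emod_lt_of_pos _ (by omega)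
      have hper : ∀ n : ℤ, ζ ^ (l * n) = ζ ^ (((l % N).toNat : ℤ) * n) := by
        intro n
        rw [Int.toNat_of_nonneg hlpos]
        have e : l * n = l % N * n + N * (l / N * n) := by
          conv_lhs => rw [← Int.emod_add_mul_ediv l N]
          ring
        have h1 : ζ ^ ((N : ℤ) * (l / N * n)) = 1 :=
          (hζ.zpow_eq_one_iff_dvd _).2 (dvd_mul_right _ _)
        rw [e, zpow_add₀ hz, h1, mul_one]
      have h' := h ⟨0, hN⟩ ⟨(l % N).toNat, by omega⟩ b 0
      simp only [Nat.cast_zero, sub_zero, Fin.mk.injEq] at h'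
      simp only [hper]
      have hiff : (0 = (l % (N : ℤ)).toNat) ↔ (N : ℤ) ∣ l := by
        rw [Int.dvd_iff_emod_eq_zero]; omega
      simp only [hiff] at h'
      have hne : ζ ^ (((l % N).toNat : ℤ) * (b * K)) ≠ 0 := zpow_ne_zero _ hz
      by_cases hl : (N : ℤ) ∣ l
      · by_cases hb : b = 0
        · subst hb; simpa [hl] using h'
        · simp only [hb, and_false, if_false, mul_eq_zero, hne, false_or] at h'
          rw [h']; simp [hb]
      · simp only [hl, false_and, if_false, mul_eq_zero, hne, false_or] at h'
        rw [h', if_neg hl]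
    · rw [Finset.mem_range]
      have := Int.emod_lt_of_pos a (b := (N : ℤ)) (by omega)
      omega
  · intro h k l i j
    rw [(hfib (i - j)).2 (fun a _ => by rw [h]; split_ifs <;> simp)]
    by_cases hij : i = j
    · subst hij
      have : (N : ℤ) ∣ (l : ℤ) - (k : ℤ) ↔ k = l := by
        constructor
        · intro hd
          have hk := k.2
          have hl := l.2
          have := Int.eq_zero_of_abs_lt_dvd hd (by rw [abs_lt]; constructor <;> omega)
          ext; omega
        · rintro rfl; simp
      simp [this]
    · simp [hij, sub_eq_zero]

/-- If `J ∣ q i * L + i` and `J, L` are coprime, then `(i,m) ↦ q i * L + i + m * (J * L)` is a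
bijection from `{0,…,L-1} × ℤ` onto the multiples of `J`; this is its form for sums, with
everything scaled by `P`. -/
theorem sum_rows_eq {J L P : ℕ} (hJ : 0 < J) (hL : 0 < L) (hcop : Nat.Coprime J L)
    (q : ℤ → ℤ) (hq : ∀ i, (J : ℤ) ∣ q i * L + i)
    {f : ℤ → ℂ} (hf : Summable fun s : ℤ => f (s * (J * P))) :
    ∑ i : Fin L, ∑' m : ℤ, f ((q i * L + i + m * (J * L)) * P) = ∑' s : ℤ, f (s * (J * P)) := by
  choose c hc using hq
  have hJ0 : (J : ℤ) ≠ 0 := by omega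
  have hL0 : (L : ℤ) ≠ 0 := by omega
  have hcop' : IsCoprime (J : ℤ) (L : ℤ) := Nat.isCoprime_iff_coprime.2 hcop
  let g : Fin L × ℤ → ℤ := fun x => c x.1 + x.2 * L
  have hgJ : ∀ x, J * g x = q x.1 * L + x.1 + x.2 * (J * L) := by
    intro x; simp only [g]; rw [hc]; ring
  have hbij : Function.Bijective g := by
    constructor
    · rintro ⟨i, m⟩ ⟨i', m'⟩ h
      have h1 := hgJ (i, m)
      rw [h, hgJ (i', m')] at h1
      simp only at h1
      have hi : i = i' := by
        have hd : (L : ℤ) ∣ (i : ℤ) - i' :=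
          ⟨q i' + m' * J - q i - m * J, by linear_combination -h1⟩
        have := i.2
        have := i'.2
        have := Int.eq_zero_of_abs_lt_dvd hd (by rw [abs_lt]; constructor <;> omega)
        ext; omega
      subst hi
      have hm : m = m' := by
        simp only [g, add_right_inj] at h
        exact mul_right_cancel₀ hL0 h
      rw [hm]
    · intro s
      have hpos : 0 ≤ (J * s) % (L : ℤ) := Int.emod_nonneg _ hL0
      have hlt : (J * s) % (L : ℤ) < L := Int.emod_lt_of_pos _ (by omega)
      have hi : ((((J * s) % (L : ℤ)).toNat : ℕ) : ℤ) = (J * s) % L := Int.toNat_of_nonneg hpos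
      have hd : (L : ℤ) ∣ s - c ((J * s) % L) := by
        refine hcop'.symm.dvd_of_dvd_mul_left
          ⟨(J * s) / L - q ((J * s) % L), ?_⟩
        have h1 := hc ((J * s) % L)
        have h2 := Int.emod_add_mul_ediv (J * s) L
        linear_combination h1 - h2
      obtain ⟨m, hm⟩ := hd
      refine ⟨(⟨((J * s) % (L : ℤ)).toNat, by omega⟩, m), ?_⟩
      simp only [g]
      rw [hi]; linear_combination -hm
  obtain ⟨e, he⟩ : ∃ e : Fin L × ℤ ≃ ℤ, ∀ x, (J : ℤ) * e x = q x.1 * L + x.1 + x.2 * (J * L) :=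
    ⟨Equiv.ofBijective g hbij, hgJ⟩
  rw [← e.tsum_eq]
  have hs : Summable fun x => f (e x * (J * P)) := e.summable_iff.2 hf
  rw [hs.tsum_prod, tsum_fintype]
  refine Finset.sum_congr rfl fun i _ => tsum_congr fun m => ?_
  rw [← he (i, m)]
  congr 1
  ring

end WeylHeisenberg

open WeylHeisenberg


/-- The Weyl–Heisenberg set
`Φ = {φ_{k,i}[n] = v[n−iK]·exp(2πi k(n−iK)/N)}` (`k ∈ {0,…,N−1}`, `i ∈ ℤ`)
is orthonormal if and only if, for every `r ∈ {0,…,P−1}`, the `L×J`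
Laurent-polynomial matrix `V_r^o(z)` with entries
`[V_r^o(z)]_{i,j} = z^{n(i,j)}·V_{p(i,j)K+iP+r}(z)`, `n(i,j) = (p(i,0)+p(0,j)−p(i,j))/J`,
is paraunitary with constant `1/N`, i.e. `Ṽ_r^o(z)·V_r^o(z) = (1/N)·I_J`.

Laurent polynomials `∑ c n z^(−n)` are represented by their coefficient functions;
the entry `[V_r^o(z)]_{i,j}` has coefficient `v (p(i,j)K + iP + r + (m + n(i,j))·M)`
at `z^(−m)` (since `V_{j₀}(z) = ∑_m v[j₀+mM] z^(−m)`), and the paraunitarity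
`Ṽ_r^o(z)·V_r^o(z) = (1/N)·I_J` is stated coefficientwise:
for all columns `j, j'` and every `t : ℤ`, the coefficient of `z^(−t)` in
`(Ṽ_r^o·V_r^o)_{j,j'}`, namely
`∑_{i<L} ∑_{m∈ℤ} conj(c_{r,i,j}(m))·c_{r,i,j'}(t+m)`, equals `(1/N)·δ[j−j']·δ[t]`. -/
theorem stmt5
    (N K P J L M : ℕ) (hN : 0 < N) (hNK : N ≤ K)
    (hP : P = Nat.gcd N K) (hJ : J = N / P) (hL : L = K / P) (hM : M = Nat.lcm N K)
    (v : ℤ → ℂ) (hv : (Function.support v).Finite)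
    (p : ℤ → ℤ → ℤ)
    (hp : ∀ i j : ℤ, 0 ≤ p i j ∧ p i j < (J : ℤ) ∧ j ≡ p i j * (L : ℤ) + i [ZMOD (J : ℤ)])
    (nn : ℤ → ℤ → ℤ)
    (hnn : ∀ i j : ℤ, nn i j = (p i 0 + p 0 j - p i j) / (J : ℤ)) :
    -- orthonormality of Φ
    (∀ (k l : Fin N) (i j : ℤ),
        ∑' n : ℤ,
          (starRingEnd ℂ)
              (v (n - i * K) *
                Complex.exp (2 * Real.pi * Complex.I * ((k : ℕ) : ℂ) * ((n - i * (K : ℤ) : ℤ) : ℂ) / N)) *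
            (v (n - j * K) *
              Complex.exp (2 * Real.pi * Complex.I * ((l : ℕ) : ℂ) * ((n - j * (K : ℤ) : ℤ) : ℂ) / N))
          = if k = l ∧ i = j then 1 else 0)
    ↔
    -- paraunitarity (with constant 1/N) of all the matrices V_r^o(z)
    (∀ (r : Fin P) (j j' : Fin J) (t : ℤ),
        ∑ i : Fin L,
          ∑' m : ℤ,
            (starRingEnd ℂ)
                (v (p (i : ℤ) (j : ℤ) * K + (i : ℤ) * P + (r : ℤ) + (m + nn (i : ℤ) (j : ℤ)) * M)) *
              v (p (i : ℤ) (j' : ℤ) * K + (i : ℤ) * P + (r : ℤ) + (t + m + nn (i : ℤ) (j' : ℤ)) * M)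
          = if j = j' ∧ t = 0 then 1 / (N : ℂ) else 0) := by
  rw [orthonormal_iff K hN hv]
  have hP0 : 0 < P := hP ▸ Nat.gcd_pos_of_pos_left _ hN
  have hNP : N = J * P := by
    rw [hJ, Nat.div_mul_cancel (hP ▸ Nat.gcd_dvd_left _ _)]
  have hKP : K = L * P := by
    rw [hL, Nat.div_mul_cancel (hP ▸ Nat.gcd_dvd_right _ _)]
  have hJ0 : 0 < J := Nat.pos_of_mul_pos_right (hNP ▸ hN)
  have hL0 : 0 < L := Nat.pos_of_mul_pos_right (hKP ▸ hN.trans_le hNK)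
  have hcop : Nat.Coprime J L := by
    rw [hJ, hL, hP]; exact Nat.coprime_div_gcd_div_gcd (hP ▸ hP0)
  have hMJ : M = J * L * P := by
    have h1 := Nat.gcd_mul_lcm N K
    rw [← hP, ← hM] at h1
    apply Nat.eq_of_mul_eq_mul_left hP0
    rw [h1, hNP, hKP]; ring
  have hcop' : IsCoprime (J : ℤ) (L : ℤ) := Nat.isCoprime_iff_coprime.2 hcop
  have hNz : (N : ℤ) = J * P := by exact_mod_cast hNP
  have hKz : (K : ℤ) = L * P := by exact_mod_cast hKP
  have hMz : (M : ℤ) = J * L * P := by exact_mod_cast hMJ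
  have hJz : (J : ℤ) ≠ 0 := by omega
  have hpd : ∀ i j : ℤ, (J : ℤ) ∣ p i j * L + i - j := fun i j => (hp i j).2.2.dvd
  -- The quotient defining `n(i,j)` is exact.
  have hnnJ : ∀ i j : ℤ, nn i j * J = p i 0 + p 0 j - p i j := by
    intro i j
    rw [hnn]
    refine Int.ediv_mul_cancel (hcop'.dvd_of_dvd_mul_left ?_)
    have h := ((hpd i 0).add (hpd 0 j)).sub (hpd i j)
    convert h using 1; ring
  have hq : ∀ i, (J : ℤ) ∣ p i 0 * L + i := fun i => by simpa using hpd i 0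
  have hcoef : ∀ (r : Fin P) (j j' : Fin J) (t : ℤ),
      ∑ i : Fin L,
          ∑' m : ℤ,
            (starRingEnd ℂ)
                (v (p (i : ℤ) (j : ℤ) * K + (i : ℤ) * P + (r : ℤ) + (m + nn (i : ℤ) (j : ℤ)) * M)) *
              v (p (i : ℤ) (j' : ℤ) * K + (i : ℤ) * P + (r : ℤ) + (t + m + nn (i : ℤ) (j' : ℤ)) * M)
        = corr N K v (r + p 0 j * K) (p 0 j' - p 0 j + t * J) := by
    intro r j j' t
    let f : ℤ → ℂ := fun x => (starRingEnd ℂ) (v (x + (r + p 0 j * K))) *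
      v (x + (r + p 0 j * K) + (p 0 j' - p 0 j + t * J) * K)
    have hsupp : (Function.support fun s : ℤ => f (s * (J * P))).Finite := by
      have hinj : Function.Injective fun s : ℤ => s * (J * P) + (r + p 0 j * K) := by
        intro s s' h
        have hJP : (J * P : ℤ) ≠ 0 := by rw [← hNz]; omega
        exact mul_right_cancel₀ hJP (add_right_cancel h)
      refine (hv.preimage hinj.injOn).subset fun s hs => ?_
      simp only [Function.mem_support, Set.mem_preimage, f] at hs ⊢
      intro h; simp [h] at hs
    have h := sum_rows_eq (P := P) hJ0 hL0 hcop (fun i => p i 0) hq (f := f)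
      (summable_of_hasFiniteSupport hsupp)
    unfold corr
    rw [hNz]
    refine Eq.trans ?_ h
    refine Finset.sum_congr rfl fun i _ => tsum_congr fun m => ?_
    simp only [f]
    congr 2
    · congr 1
      rw [hKz, hMz]; linear_combination (L * P : ℤ) * hnnJ i j
    · rw [hKz, hMz]; linear_combination (L * P : ℤ) * hnnJ i j'
  simp only [hcoef]
  -- `p 0` takes each value in `{0,…,J-1}` exactly once on `{0,…,J-1}`.
  have hp0inj : ∀ j j' : Fin J, (J : ℤ) ∣ p 0 j - p 0 j' → j = j' := by
    intro j j' h
    have hd : (J : ℤ) ∣ (j : ℤ) - j' := by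
      obtain ⟨x, hx⟩ := hpd 0 j
      obtain ⟨y, hy⟩ := hpd 0 j'
      obtain ⟨w, hw⟩ := h
      exact ⟨y - x + w * L, by linear_combination hy - hx + (L : ℤ) * hw⟩
    have := j.2
    have := j'.2
    have := Int.eq_zero_of_abs_lt_dvd hd (by rw [abs_lt]; constructor <;> omega)
    ext; omega
  have hp0surj : ∀ x : ℤ, ∃ j : Fin J, (J : ℤ) ∣ x - p 0 j := by
    intro x
    have hpos : 0 ≤ (x * L) % (J : ℤ) := Int.emod_nonneg _ hJz
    have hlt : (x * L) % (J : ℤ) < J := Int.emod_lt_of_pos _ (by omega)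
    refine ⟨⟨((x * L) % (J : ℤ)).toNat, by omega⟩, ?_⟩
    simp only
    rw [Int.toNat_of_nonneg hpos]
    refine hcop'.dvd_of_dvd_mul_left ?_
    have h1 := hpd 0 ((x * L) % J)
    have h2 : (J : ℤ) ∣ x * L - (x * L) % J := Int.dvd_self_sub_emod
    convert h2.sub h1 using 1; ring
  constructor
  · intro h r j j' t
    rw [h]
    refine if_congr ?_ rfl rfl
    constructor
    · intro h0
      have hj : j = j' := hp0inj j j' ⟨t, by linear_combination -h0⟩
      subst hj
      refine ⟨rfl, ?_⟩
      have : t * J = 0 := by linear_combination h0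
      exact (mul_eq_zero.1 this).resolve_right hJz
    · rintro ⟨rfl, rfl⟩; ring
  · intro h a b
    -- Write `a ≡ r + p(0,j)K (mod N)`: `r` is `a mod P`, and `a - r = P x` with `x ≡ p(0,j)L (mod J)`.
    have hrpos : 0 ≤ a % (P : ℤ) := Int.emod_nonneg _ (by omega)
    have hrlt : a % (P : ℤ) < P := Int.emod_lt_of_pos _ (by omega)
    obtain ⟨u, w, huw⟩ := hcop'
    obtain ⟨j, d, hd⟩ := hp0surj (w * (a / P))
    obtain ⟨j', t, ht⟩ := hp0surj (b + p 0 j)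
    have h1 := h ⟨(a % (P : ℤ)).toNat, by omega⟩ j j' t
    simp only [Int.toNat_of_nonneg hrpos] at h1
    have hb : p 0 j' - p 0 j + t * J = b := by linear_combination -ht
    have ha : a = (a % P + p 0 j * K) + (u * (a / P) + L * d) * N := by
      have h2 := Int.emod_add_mul_ediv a P
      rw [hKz, hNz]
      linear_combination -h2 + (L * P : ℤ) * hd - (P * (a / P) : ℤ) * huw
    rw [ha, corr_add_mul, ← hb, h1]
    refine if_congr ?_ rfl rfl
    constructor
    · rintro ⟨rfl, rfl⟩; ring
    · intro h0
      have hj : j = j' := hp0inj j j' ⟨t, by linear_combination -h0⟩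
      subst hj
      refine ⟨rfl, ?_⟩
      have : t * J = 0 := by linear_combination h0
      exact (mul_eq_zero.1 this).resolve_right hJz
end

section
/- Let N, K be positive integers with K ≥ N, P = gcd(N,K), J = N/P, L = K/P, M = lcm(N,K). Given any family of P matrices V_r^o(z), r ∈ {0,…,P−1}, each an L×J matrix of Laurent polynomials over ℂ that is paraunitary with constant 1/N (i.e. Ṽ_r^o(z)·V_r^o(z) = (1/N)·I_J, where tilde denotes transposition, coefficient conjugation, and the substitution z ↦ z⁻¹), suppose all entries are finitely supported and define v : ℤ → ℂ by declaring its M-component polyphase components to be V_{p(i,j)K+iP+r}(z) = z^{−n(i,j)}·[V_r^o(z)]_{i,j}, where n(i,j) = (p(i,0)+p(0,j)−p(i,j))/J. Then the Weyl–Heisenberg set Φ generated by v is orthonormal. -/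
/-!
Shifting the summation index, the inner product of `φ_{k,i}` and `φ_{l,j}` is, up to a unimodular
factor, `∑_n conj (v n) * v (n + d K) * χ n` with `d = i - j` and `χ n = exp (2πi (l - k) n / N)`.

By the Chinese remainder theorem every integer is uniquely `p(i,j) K + i P + r + m M` with `r < P`,
`i < L`, `j < J`, `m ∈ ℤ` (`idx_bijective`), and such an integer is congruent to `j P + r` modulo
`N`, so `χ` depends on `(r, j)` only. Translation by `d K` keeps `r` and `i`, sends `j` to
`j' ≡ j + d L (mod J)`, and the exponents `n(i,j)` are chosen precisely so that the shift of the
coefficient index is `t = (d + p(0,j) - p(0,j')) / J`, independent of `i` (`exists_shift`).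
Paraunitarity hence evaluates the sum over `i` and `m` to `1/N` if `d = 0` and to `0` otherwise.
What remains is the sum of the character `χ` over a full period (`sum_char`).
-/

/-- The integer `p(i,j) K + i P + r + m M` with coordinates `((r, j, i), m)`, where
`K = P L` and `M = P J L`. -/
def idx (P J L : ℕ) (p : ℤ → ℤ → ℤ) (x : (Fin P × Fin J × Fin L) × ℤ) : ℤ :=
  p (x.1.2.2 : ℤ) (x.1.2.1 : ℤ) * ((P : ℤ) * L) + (x.1.2.2 : ℤ) * P + (x.1.1 : ℤ)
    + x.2 * ((P : ℤ) * J * L)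

lemma eq_of_add_mul_eq {b x y s t : ℤ} (hx : 0 ≤ x) (hx' : x < b) (hy : 0 ≤ y) (hy' : y < b)
    (h : x + b * s = y + b * t) : x = y ∧ s = t := by
  have h1 : x = y := by
    have := congrArg (· % b) h
    simpa [Int.add_mul_emod_self_left, Int.emod_eq_of_lt hx hx', Int.emod_eq_of_lt hy hy'] using this
  subst h1
  refine ⟨rfl, ?_⟩
  have hb : b ≠ 0 := by omega
  exact mul_left_cancel₀ hb (by linarith)

lemma idx_bijective (P J L : ℕ) (hP : 0 < P) (hJ : 0 < J) (hL : 0 < L)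
    (hco : IsCoprime (J : ℤ) (L : ℤ)) (p : ℤ → ℤ → ℤ)
    (hp : ∀ i j : ℤ, 0 ≤ p i j ∧ p i j < (J : ℤ) ∧ j ≡ p i j * (L : ℤ) + i [ZMOD (J : ℤ)]) :
    Function.Bijective (idx P J L p) := by
  have hP' : (0 : ℤ) < P := by exact_mod_cast hP
  have hJ' : (0 : ℤ) < J := by exact_mod_cast hJ
  have hL' : (0 : ℤ) < L := by exact_mod_cast hL
  constructor
  · rintro ⟨⟨r, j, i⟩, m⟩ ⟨⟨r', j', i'⟩, m'⟩ h
    simp only [idx] at h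
    obtain ⟨h1, h2, h3⟩ := hp i j
    obtain ⟨h1', h2', h3'⟩ := hp i' j'
    have hr := r.2
    have hr' := r'.2
    have hi := i.2
    have hi' := i'.2
    have hj := j.2
    have hj' := j'.2
    obtain ⟨er, h⟩ := eq_of_add_mul_eq (b := P) (x := (r : ℤ)) (y := (r' : ℤ))
      (s := (i : ℤ) + L * (p i j + J * m)) (t := (i' : ℤ) + L * (p i' j' + J * m'))
      (by omega) (by omega) (by omega) (by omega) (by linarith)
    obtain ⟨ei, h⟩ := eq_of_add_mul_eq (by omega) (by omega) (by omega) (by omega) h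
    obtain ⟨ep, em⟩ := eq_of_add_mul_eq h1 h2 h1' h2' h
    have ej : (j : ℤ) ≡ j' [ZMOD J] := by
      rw [ep, ei] at h3
      exact h3.trans h3'.symm
    have ej' : (j : ℤ) = j' := by
      rw [Int.ModEq, Int.emod_eq_of_lt (by omega) (by omega),
        Int.emod_eq_of_lt (by omega) (by omega)] at ej
      exact ej
    have e1 : r = r' := Fin.ext (by omega)
    have e2 : i = i' := Fin.ext (by omega)
    have e3 : j = j' := Fin.ext (by omega)
    rw [e1, e2, e3, em]
  · intro n
    have a1 := Int.emod_nonneg n hP'.ne'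
    have a2 := Int.emod_lt_of_pos n hP'
    have a3 := Int.emod_nonneg (n / P) hL'.ne'
    have a4 := Int.emod_lt_of_pos (n / P) hL'
    have a5 := Int.emod_nonneg (n / P) hJ'.ne'
    have a6 := Int.emod_lt_of_pos (n / P) hJ'
    obtain ⟨-, -, h3⟩ := hp (n / P % L) (n / P % J)
    have d1 := Int.emod_add_mul_ediv n P
    have d2 := Int.emod_add_mul_ediv (n / P) L
    have hdvd : (J : ℤ) ∣ n / P / L - p (n / P % L) (n / P % J) := by
      refine hco.dvd_of_dvd_mul_right ?_
      have h4 : p (n / P % L) (n / P % J) * (L : ℤ) + n / P % L ≡ n / P [ZMOD J] :=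
        h3.symm.trans (Int.mod_modEq _ _)
      have := h4.dvd
      have e : (n / P / L - p (n / P % L) (n / P % J)) * (L : ℤ)
          = n / P - (p (n / P % L) (n / P % J) * (L : ℤ) + n / P % L) := by
        linear_combination d2
      rwa [e]
    obtain ⟨m, hm⟩ := hdvd
    refine ⟨((⟨(n % P).toNat, by omega⟩, ⟨(n / P % J).toNat, by omega⟩,
      ⟨(n / P % L).toNat, by omega⟩), m), ?_⟩
    simp only [idx, Int.toNat_of_nonneg a1, Int.toNat_of_nonneg a3, Int.toNat_of_nonneg a5]
    have hw : n / P / L = p (n / P % L) (n / P % J) + J * m := by linarith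
    calc _ = n % P + P * (n / P % L + L * (p (n / P % L) (n / P % J) + J * m)) := by ring
      _ = n := by rw [← hw, d2, d1]

/-- Translation of the index by `d K`: the residue `j` moves to `j'`, and the shift `t` of the
coefficient index, corrected by the exponents `nn`, is the same for all `i`. -/
lemma exists_shift (P J L : ℕ) (hJ : 0 < J)
    (hco : IsCoprime (J : ℤ) (L : ℤ)) (p : ℤ → ℤ → ℤ)
    (hp : ∀ i j : ℤ, 0 ≤ p i j ∧ p i j < (J : ℤ) ∧ j ≡ p i j * (L : ℤ) + i [ZMOD (J : ℤ)])
    (nn : ℤ → ℤ → ℤ)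
    (hnn : ∀ i j : ℤ, nn i j = (p i 0 + p 0 j - p i j) / (J : ℤ)) (d : ℤ) (j : Fin J) :
    ∃ (j' : Fin J) (t : ℤ), ((j = j' ∧ t = 0) ↔ d = 0) ∧
      ∀ (r : Fin P) (i : Fin L) (m : ℤ), ∃ m' : ℤ,
        idx P J L p ((r, j, i), m) + d * ((P : ℤ) * L) = idx P J L p ((r, j', i), m') ∧
        m' - nn i j' = t + (m - nn i j) := by
  have hJ' : (0 : ℤ) < J := by exact_mod_cast hJ
  have b1 := Int.emod_nonneg ((j : ℤ) + d * L) hJ'.ne'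
  have b2 := Int.emod_lt_of_pos ((j : ℤ) + d * L) hJ'
  have cancel : ∀ a : ℤ, (J : ℤ) ∣ a * L → (J : ℤ) ∣ a := fun a h => hco.dvd_of_dvd_mul_right h
  have hn : ∀ i j : ℤ, J * nn i j = p i 0 + p 0 j - p i j := by
    intro i j
    rw [hnn]
    refine Int.mul_ediv_cancel' (cancel _ ?_)
    have e1 := (hp i 0).2.2.dvd
    have e2 := (hp 0 j).2.2.dvd
    have e3 := (hp i j).2.2.dvd
    have e : (p i 0 + p 0 j - p i j) * (L : ℤ)
        = (p i 0 * L + i - 0) + (p 0 j * L + 0 - j) - (p i j * L + i - j) := by ring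
    rw [e]
    exact (e1.add e2).sub e3
  obtain ⟨q, hq⟩ : ∃ q : Fin J, (q : ℤ) = ((j : ℤ) + d * L) % J :=
    ⟨⟨(((j : ℤ) + d * L) % J).toNat, by omega⟩, by simp [Int.toNat_of_nonneg b1]⟩
  have hqd : (J : ℤ) ∣ j + d * L - q := by
    rw [hq]; exact (Int.mod_modEq _ _).dvd
  have key : ∀ i : ℤ, ∃ e : ℤ, p i j + d - p i q = J * e := by
    intro i
    refine cancel _ ?_
    have e1 := (hp i j).2.2.dvd
    have e2 := (hp i q).2.2.dvd
    have e : (p i j + d - p i q) * (L : ℤ)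
        = (p i j * L + i - j) - (p i q * L + i - q) + (j + d * L - q) := by ring
    rw [e]
    exact (e1.sub e2).add hqd
  obtain ⟨t, ht⟩ := key 0
  refine ⟨q, t, ⟨?_, ?_⟩, ?_⟩
  · rintro ⟨rfl, rfl⟩
    linarith
  · rintro rfl
    have hjq : j = q := by
      apply Fin.ext
      have := j.2
      rw [zero_mul, add_zero, Int.emod_eq_of_lt (by omega) (by omega)] at hq
      omega
    refine ⟨hjq, ?_⟩
    subst hjq
    have : (J : ℤ) * t = 0 := by linarith
    exact (mul_eq_zero.mp this).resolve_left hJ'.ne'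
  · intro r i m
    obtain ⟨e, he⟩ := key i
    refine ⟨m + e, ?_, ?_⟩
    · simp only [idx]
      linear_combination ((P : ℤ) * L) * he
    · apply mul_left_cancel₀ hJ'.ne'
      linear_combination ht - he - hn i q + hn i j

/-- The character sum over a full period `{0,…,N-1}`, `N = J P`, the period being enumerated as
`j P + r`. -/
lemma sum_char (N P J : ℕ) (hN : 0 < N) (hNJ : N = J * P) (k l : Fin N) :
    ∑ r : Fin P, ∑ j : Fin J,
      Complex.exp (2 * Real.pi * Complex.I * ((l : ℕ) - (k : ℕ) : ℂ) * (((j : ℤ) * P + r : ℤ) : ℂ) / N)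
      = if k = l then (N : ℂ) else 0 := by
  have hN0 : (N : ℂ) ≠ 0 := by exact_mod_cast hN.ne'
  set ζ : ℂ := Complex.exp (2 * Real.pi * Complex.I * ((l : ℕ) - (k : ℕ) : ℂ) / N) with hζ
  have hterm : ∀ (r : Fin P) (j : Fin J),
      Complex.exp (2 * Real.pi * Complex.I * ((l : ℕ) - (k : ℕ) : ℂ) * (((j : ℤ) * P + r : ℤ) : ℂ) / N)
        = ζ ^ ((r : ℕ) + P * (j : ℕ)) := by
    intro r j
    rw [hζ, ← Complex.exp_nat_mul]
    congr 1
    push_cast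
    ring
  simp_rw [hterm]
  rw [Finset.sum_comm, ← Fintype.sum_prod_type' (f := fun (j : Fin J) (r : Fin P) =>
    ζ ^ ((r : ℕ) + P * (j : ℕ)))]
  have hs : ∑ x : Fin J × Fin P, ζ ^ ((x.2 : ℕ) + P * (x.1 : ℕ)) = ∑ s ∈ Finset.range N, ζ ^ s := by
    rw [hNJ, ← Fin.sum_univ_eq_sum_range (fun s => ζ ^ s),
      ← finProdFinEquiv.sum_comp]
    rfl
  rw [hs]
  split_ifs with h
  · subst h
    simp [hζ]
  · have h1 : ζ ^ N = 1 := by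
      rw [hζ, ← Complex.exp_nat_mul, Complex.exp_eq_one_iff]
      refine ⟨(l : ℤ) - (k : ℤ), ?_⟩
      push_cast
      field_simp
    have h2 : ζ ≠ 1 := by
      intro h2
      rw [hζ, Complex.exp_eq_one_iff] at h2
      obtain ⟨n, hn⟩ := h2
      have hpi : (2 * Real.pi * Complex.I : ℂ) ≠ 0 := Complex.two_pi_I_ne_zero
      have h3 : (((l : ℕ) : ℂ) - ((k : ℕ) : ℂ)) = n * N := by
        apply mul_left_cancel₀ hpi
        field_simp at hn
        linear_combination (2 * Real.pi * Complex.I) * hn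
      have h4 : ((l : ℕ) : ℤ) - ((k : ℕ) : ℤ) = n * N := by exact_mod_cast h3
      have hk := k.2
      have hl := l.2
      apply h
      have h5 : ((k : ℕ) : ℤ) + N * n = ((l : ℕ) : ℤ) + N * 0 := by linarith
      have := (eq_of_add_mul_eq (by omega) (by omega) (by omega) (by omega) h5).1
      exact Fin.ext (by omega)
    rw [geom_sum_eq h2, h1]
    simp

lemma tsum_eq_sum_of_bijective {A B C : Type*} [Fintype A] [Fintype B] [Fintype C]
    {g : (A × B × C) × ℤ → ℤ} (hg : Function.Bijective g) {F : ℤ → ℂ} (hF : Summable F) :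
    ∑' n, F n = ∑ r : A, ∑ j : B, ∑ i : C, ∑' m : ℤ, F (g ((r, j, i), m)) := by
  have hs : Summable (fun x => F (g x)) := hF.comp_injective hg.1
  have h1 : ∑' x, F (g x) = ∑' n, F n := (Equiv.ofBijective g hg).tsum_eq F
  rw [← h1, hs.tsum_prod, tsum_fintype, Fintype.sum_prod_type]
  simp_rw [Fintype.sum_prod_type]

/-- Given any family of `P` matrices `V_r^o(z)`, `r ∈ {0,…,P−1}`,
each an `L×J` matrix of (finitely supported) Laurent polynomials over `ℂ` that is
paraunitary with constant `1/N` (`Ṽ_r^o(z)·V_r^o(z) = (1/N)·I_J`), if `v : ℤ → ℂ`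
is defined by declaring its `M`-component polyphase components to be
`V_{p(i,j)K+iP+r}(z) = z^{−n(i,j)}·[V_r^o(z)]_{i,j}` with
`n(i,j) = (p(i,0)+p(0,j)−p(i,j))/J`, then the Weyl–Heisenberg set `Φ` generated
by `v` is orthonormal.

Laurent polynomials are represented by coefficient functions (`c r i j m` is the
coefficient of `z^(−m)` in `[V_r^o(z)]_{i,j}`); paraunitarity is stated
coefficientwise, and the polyphase relation reads
`v (p(i,j)·K + i·P + r + m·M) = c r i j (m − n(i,j))` for all `m : ℤ`. -/
theorem stmt6
    (N K P J L M : ℕ) (hN : 0 < N) (hNK : N ≤ K)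
    (hP : P = Nat.gcd N K) (hJ : J = N / P) (hL : L = K / P) (hM : M = Nat.lcm N K)
    (p : ℤ → ℤ → ℤ)
    (hp : ∀ i j : ℤ, 0 ≤ p i j ∧ p i j < (J : ℤ) ∧ j ≡ p i j * (L : ℤ) + i [ZMOD (J : ℤ)])
    (nn : ℤ → ℤ → ℤ)
    (hnn : ∀ i j : ℤ, nn i j = (p i 0 + p 0 j - p i j) / (J : ℤ))
    -- the entries of the matrices V_r^o(z), as coefficient functions
    (c : Fin P → Fin L → Fin J → ℤ → ℂ)
    (hcfin : ∀ (r : Fin P) (i : Fin L) (j : Fin J), (Function.support (c r i j)).Finite)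
    -- paraunitarity with constant 1/N of each V_r^o(z)
    (hpara : ∀ (r : Fin P) (j j' : Fin J) (t : ℤ),
        ∑ i : Fin L, ∑' m : ℤ, (starRingEnd ℂ) (c r i j m) * c r i j' (t + m)
          = if j = j' ∧ t = 0 then 1 / (N : ℂ) else 0)
    (v : ℤ → ℂ)
    -- the polyphase components of v are z^{−n(i,j)}·[V_r^o(z)]_{i,j}
    (hv : ∀ (r : Fin P) (i : Fin L) (j : Fin J) (m : ℤ),
        v (p (i : ℤ) (j : ℤ) * K + (i : ℤ) * P + (r : ℤ) + m * M)
          = c r i j (m - nn (i : ℤ) (j : ℤ))) :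
    -- the Weyl–Heisenberg set Φ generated by v is orthonormal
    ∀ (k l : Fin N) (i j : ℤ),
      ∑' n : ℤ,
        (starRingEnd ℂ)
            (v (n - i * K) *
              Complex.exp (2 * Real.pi * Complex.I * ((k : ℕ) : ℂ) * ((n - i * (K : ℤ) : ℤ) : ℂ) / N)) *
          (v (n - j * K) *
            Complex.exp (2 * Real.pi * Complex.I * ((l : ℕ) : ℂ) * ((n - j * (K : ℤ) : ℤ) : ℂ) / N))
        = if k = l ∧ i = j then 1 else 0 := by
  intro k l a b
  have hK : 0 < K := hN.trans_le hNK
  have hP0 : 0 < P := hP ▸ Nat.gcd_pos_of_pos_left _ hN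
  have hNP : N = J * P := by
    rw [hJ, Nat.div_mul_cancel (hP ▸ Nat.gcd_dvd_left N K)]
  have hKP : K = P * L := by
    rw [hL, Nat.mul_div_cancel' (hP ▸ Nat.gcd_dvd_right N K)]
  have hJ0 : 0 < J := Nat.pos_of_ne_zero (by rintro rfl; omega)
  have hL0 : 0 < L := Nat.pos_of_ne_zero (by rintro rfl; omega)
  have hco : IsCoprime (J : ℤ) (L : ℤ) := by
    rw [Nat.isCoprime_iff_coprime, hJ, hL, hP]
    exact Nat.coprime_div_gcd_div_gcd (Nat.gcd_pos_of_pos_left _ hN)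
  have hMP : M = P * J * L := by
    apply Nat.eq_of_mul_eq_mul_left hP0
    have := Nat.gcd_mul_lcm N K
    rw [← hP, ← hM, hNP, hKP] at this
    rw [this]; ring
  have hN0 : (N : ℂ) ≠ 0 := by exact_mod_cast hN.ne'
  have hv' : ∀ (r : Fin P) (i : Fin L) (j : Fin J) (m : ℤ),
      v (idx P J L p ((r, j, i), m)) = c r i j (m - nn (i : ℤ) (j : ℤ)) := by
    intro r i j m
    rw [← hv]
    simp only [idx, hKP, hMP]
    push_cast
    rfl
  have hbij := idx_bijective P J L hP0 hJ0 hL0 hco p hp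
  set χ : ℤ → ℂ := fun n =>
    Complex.exp (2 * Real.pi * Complex.I * ((l : ℕ) - (k : ℕ) : ℂ) * (n : ℂ) / N) with hχ
  set d : ℤ := a - b with hd
  set F : ℤ → ℂ := fun n => (starRingEnd ℂ) (v n) * v (n + d * ((P : ℤ) * L)) * χ n with hF
  set C : ℂ := Complex.exp (2 * Real.pi * Complex.I * ((l : ℕ) : ℂ) * ((d * K : ℤ) : ℂ) / N) with hC
  -- the integers with coordinates `(r, j)` form one residue class modulo `N`, where `χ` is constant
  have hχidx : ∀ (r : Fin P) (j : Fin J) (i : Fin L) (m : ℤ),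
      χ (idx P J L p ((r, j, i), m)) = χ ((j : ℤ) * P + r) := by
    intro r j i m
    obtain ⟨s, hs⟩ := (hp i j).2.2.dvd
    have e1 : idx P J L p ((r, j, i), m) = ((j : ℤ) * P + r) + (s + m * L) * N := by
      rw [hNP]
      simp only [idx]
      push_cast
      linear_combination (P : ℤ) * hs
    rw [e1, hχ]
    simp only
    rw [Complex.exp_eq_exp_iff_exists_int]
    refine ⟨((l : ℤ) - (k : ℤ)) * (s + m * L), ?_⟩
    push_cast
    field_simp
  have hvfin : (Function.support v).Finite := by
    have h1 : (Function.support (fun x => v (idx P J L p x))).Finite := by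
      have h2 : ∀ y : Fin P × Fin J × Fin L,
          ({m : ℤ | c y.1 y.2.2 y.2.1 (m - nn (y.2.2 : ℤ) (y.2.1 : ℤ)) ≠ 0}).Finite := fun y =>
        (hcfin y.1 y.2.2 y.2.1).preimage (sub_left_injective.injOn)
      refine (Set.finite_iUnion fun y => (h2 y).image (Prod.mk y)).subset ?_
      rintro ⟨⟨r, j, i⟩, m⟩ hx
      rw [Function.mem_support, hv'] at hx
      exact Set.mem_iUnion.mpr ⟨(r, j, i), m, hx, rfl⟩
    refine (h1.image (idx P J L p)).subset ?_
    intro n hn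
    obtain ⟨x, rfl⟩ := hbij.2 n
    exact ⟨x, hn, rfl⟩
  have hFsum : Summable F := by
    refine summable_of_hasFiniteSupport (hvfin.subset ?_)
    intro n hn h0
    exact hn (by simp [hF, h0])
  have hmain : ∑' n, F n = if k = l ∧ a = b then 1 else 0 := by
    rw [tsum_eq_sum_of_bijective hbij hFsum]
    have hinner : ∀ (r : Fin P) (j : Fin J),
        ∑ i : Fin L, ∑' m : ℤ, F (idx P J L p ((r, j, i), m))
          = χ ((j : ℤ) * P + r) * (if d = 0 then 1 / (N : ℂ) else 0) := by
      intro r j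
      obtain ⟨j', t, hiff, hsh⟩ := exists_shift P J L hJ0 hco p hp nn hnn d j
      have hpr := hpara r j j' t
      simp only [hiff] at hpr
      rw [← hpr, Finset.mul_sum]
      refine Finset.sum_congr rfl fun i _ => ?_
      rw [← tsum_mul_left, ← (Equiv.subRight (nn (i : ℤ) (j : ℤ))).tsum_eq (fun m =>
        χ ((j : ℤ) * P + r) * ((starRingEnd ℂ) (c r i j m) * c r i j' (t + m)))]
      refine tsum_congr fun m => ?_
      obtain ⟨m', h1, h2⟩ := hsh r i m
      simp only [hF, hχidx, h1, hv', h2, Equiv.subRight_apply]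
      ring
    simp_rw [hinner, ← Finset.sum_mul]
    rw [hχ, sum_char N P J hN hNP k l]
    have hd0 : d = 0 ↔ a = b := sub_eq_zero
    by_cases h1 : k = l <;> by_cases h2 : a = b <;> simp [h1, h2, hd0, hN0]
  rw [← (Equiv.addRight (a * (K : ℤ))).tsum_eq]
  have hterm : ∀ n : ℤ, (starRingEnd ℂ)
            (v (n + a * K - a * K) *
              Complex.exp (2 * Real.pi * Complex.I * ((k : ℕ) : ℂ) * ((n + a * K - a * (K : ℤ) : ℤ) : ℂ) / N)) *
          (v (n + a * K - b * K) *
            Complex.exp (2 * Real.pi * Complex.I * ((l : ℕ) : ℂ) * ((n + a * K - b * (K : ℤ) : ℤ) : ℂ) / N))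
      = C * F n := by
    intro n
    have e1 : n + a * K - a * K = n := by ring
    have e2 : n + a * K - b * K = n + d * ((P : ℤ) * L) := by
      rw [hKP, hd]; push_cast; ring
    have e3 : n + a * K - b * K = n + d * K := by rw [hd]; ring
    have e4 : (starRingEnd ℂ) (Complex.exp (2 * Real.pi * Complex.I * ((k : ℕ) : ℂ) * (n : ℂ) / N))
        * Complex.exp (2 * Real.pi * Complex.I * ((l : ℕ) : ℂ) * ((n + d * (K : ℤ) : ℤ) : ℂ) / N)
        = C * χ n := by
      rw [← Complex.exp_conj, hC, hχ, ← Complex.exp_add, ← Complex.exp_add]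
      congr 1
      simp only [map_mul, map_div₀, Complex.conj_I, Complex.conj_ofReal, map_natCast, map_intCast,
        map_ofNat]
      push_cast
      ring
    have e5 : v (n + a * K - b * K) = v (n + d * ((P : ℤ) * L)) := by rw [e2]
    rw [e5, e1, e3, map_mul]
    simp only [hF]
    rw [mul_mul_mul_comm, e4]
    ring
  simp only [Equiv.coe_addRight]
  rw [tsum_congr hterm, tsum_mul_left, hmain]
  split_ifs with h
  · have : d = 0 := sub_eq_zero.mpr h.2
    simp [hC, this]
  · simp
end

section
/- Let N, K be positive integers with K ≥ N, and let v : ℤ → ℝ be finitely supported. The Weyl–Heisenberg set Φ = {φ_{k,i}} with φ_{k,i}[n] = v[n−iK]·exp(2πi k(n−iK)/N), k ∈ {0,…,N−1}, i ∈ ℤ, is orthonormal if and only if ∑_{i∈ℤ} v[n+iN]·v[n+iN+jK] = (1/N)·δ[j] for every n ∈ {0,…,N−1} and every j ∈ ℤ. -/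
/-!
With `χ` the standard additive character of `ℤ/N`, the substitution `n ↦ m + iK` turns the inner
product of `φ_{k,i}` and `φ_{l,j}` into `χ(l d K) ∑ₘ v[m] v[m + dK] χ((l - k) m)`, where `d = i - j`.
Grouping `m` by its residue modulo `N` makes the sum the discrete Fourier transform, at frequency
`k - l`, of the folded correlation `a ↦ ∑_q v[a + qN] v[a + qN + dK]` on `ℤ/N`
(`inner_eq_dft`). Orthonormality therefore says that this transform is `δ[d]` times the indicator
of `0`, which is the transform of the constant `δ[d]/N` (`dft_const`); injectivity of the transform
gives the equivalence.
-/

open Complex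

open ZMod in
lemma dft_const {N : ℕ} [NeZero N] (c : ℂ) (k : ZMod N) :
    dft (fun _ : ZMod N => c) k = if k = 0 then N * c else 0 := by
  have h := AddChar.sum_mulShift (-k) (isPrimitive_stdAddChar N)
  simp only [dft_apply, smul_eq_mul, ← Finset.sum_mul, ← mul_neg, h, neg_eq_zero, ZMod.card]
  split_ifs <;> simp

/-- The correlation of `v` with its translate by `s`, folded modulo `N`; a residue class is
represented by its least nonnegative element. -/
noncomputable def foldedCorr (N : ℕ) (v : ℤ → ℝ) (s : ℤ) (a : ZMod N) : ℝ :=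
  ∑' q : ℤ, v ((a.val : ℤ) + q * N) * v ((a.val : ℤ) + q * N + s)

/-- Residues modulo `N`, identified with their representatives in `{0,…,N-1}`. -/
noncomputable def finResidue (N : ℕ) [NeZero N] : Fin N ≃ ZMod N where
  toFun k := ((k : ℕ) : ZMod N)
  invFun a := ⟨a.val, a.val_lt⟩
  left_inv k := by ext; simp [ZMod.val_natCast, Nat.mod_eq_of_lt k.2]
  right_inv a := by simp

/-- Summation over `ℤ` by residue classes modulo `N`. -/
lemma tsum_int_eq_sum_zmod {N : ℕ} [NeZero N] {f : ℤ → ℂ} (hf : f.support.Finite) :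
    ∑' m : ℤ, f m = ∑ a : ZMod N, ∑' q : ℤ, f ((a.val : ℤ) + q * N) := by
  let e : ZMod N × ℤ ≃ ℤ :=
    (((finResidue N).symm.prodCongr (Equiv.refl ℤ)).trans (Equiv.prodComm _ _)).trans
      (Int.divModEquiv N).symm
  have he : ∀ p : ZMod N × ℤ, e p = (p.1.val : ℤ) + p.2 * N := fun p => by
    simp [e, Int.divModEquiv, finResidue, add_comm]
  have hs : Summable (fun p => f (e p)) :=
    e.summable_iff.mpr (summable_of_hasFiniteSupport hf)
  rw [← e.tsum_eq f, hs.tsum_prod, tsum_fintype]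
  simp only [he]

open ZMod in
/-- Inner products of Weyl–Heisenberg waveforms are, up to a unimodular factor, values of the
discrete Fourier transform of the folded correlation. -/
lemma inner_eq_dft {N : ℕ} [NeZero N] (K : ℕ) {v : ℤ → ℝ} (hv : (Function.support v).Finite)
    (k l : ℕ) (i j : ℤ) :
    ∑' n : ℤ,
      (starRingEnd ℂ)
          ((v (n - i * K) : ℂ) *
            Complex.exp (2 * Real.pi * Complex.I * (k : ℂ) * ((n - i * (K : ℤ) : ℤ) : ℂ) / N)) *
        ((v (n - j * K) : ℂ) *
          Complex.exp (2 * Real.pi * Complex.I * (l : ℂ) * ((n - j * (K : ℤ) : ℤ) : ℂ) / N))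
      = stdAddChar ((l * ((i - j) * K) : ℤ) : ZMod N) *
          dft (fun a => (foldedCorr N v ((i - j) * K) a : ℂ)) ((k : ZMod N) - (l : ZMod N)) := by
  have hexp : ∀ (k : ℕ) (m : ℤ), Complex.exp (2 * Real.pi * Complex.I * (k : ℂ) * (m : ℂ) / N)
      = stdAddChar ((k : ZMod N) * (m : ZMod N)) := fun k m => by
    have h := stdAddChar_coe (N := N) (k * m)
    push_cast at h
    rw [h, mul_assoc _ (k : ℂ)]
  simp only [hexp]
  rw [← (Equiv.addRight (i * (K : ℤ))).tsum_eq]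
  have hterm : ∀ m : ℤ,
      (starRingEnd ℂ) ((v (m + i * K - i * K) : ℂ) *
          stdAddChar ((k : ZMod N) * ((m + i * K - i * K : ℤ) : ZMod N))) *
        ((v (m + i * K - j * K) : ℂ) *
          stdAddChar ((l : ZMod N) * ((m + i * K - j * K : ℤ) : ZMod N)))
      = stdAddChar ((l * ((i - j) * K) : ℤ) : ZMod N) *
          (stdAddChar (-((m : ZMod N) * ((k : ZMod N) - (l : ZMod N)))) *
            ((v m * v (m + (i - j) * K) : ℝ) : ℂ)) := fun m => by
    have h1 : m + i * K - j * K = m + (i - j) * K := by ring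
    have h2 : (stdAddChar (-((k : ZMod N) * (m : ZMod N))) : ℂ) *
        stdAddChar ((l : ZMod N) * ((m + (i - j) * K : ℤ) : ZMod N)) =
        stdAddChar ((l * ((i - j) * K) : ℤ) : ZMod N) *
          stdAddChar (-((m : ZMod N) * ((k : ZMod N) - (l : ZMod N)))) := by
      rw [← AddChar.map_add_eq_mul, ← AddChar.map_add_eq_mul]
      congr 1
      push_cast
      ring
    rw [add_sub_cancel_right, h1, map_mul, Complex.conj_ofReal, ← AddChar.map_neg_eq_conj]
    push_cast at h2 ⊢
    linear_combination ((v m : ℂ) * v (m + (i - j) * K)) * h2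
  simp only [Equiv.coe_addRight, hterm]
  rw [tsum_mul_left, tsum_int_eq_sum_zmod (N := N), dft_apply]
  · congr 1
    refine Finset.sum_congr rfl fun a _ => ?_
    simp [foldedCorr, tsum_mul_left, Complex.ofReal_tsum]
  · refine hv.subset fun m hm h0 => hm ?_
    simp [h0]

/-- For a finitely supported real-valued `v : ℤ → ℝ`, the
Weyl–Heisenberg set `Φ = {φ_{k,i}[n] = v[n−iK]·exp(2πi k(n−iK)/N)}`
(`k ∈ {0,…,N−1}`, `i ∈ ℤ`) is orthonormal if and only if
`∑_{i∈ℤ} v[n+iN]·v[n+iN+jK] = (1/N)·δ[j]` for every `n ∈ {0,…,N−1}` and every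
`j ∈ ℤ`. -/
theorem stmt7
    (N K : ℕ) (hN : 0 < N) (hNK : N ≤ K)
    (v : ℤ → ℝ) (hv : (Function.support v).Finite) :
    (∀ (k l : Fin N) (i j : ℤ),
        ∑' n : ℤ,
          (starRingEnd ℂ)
              ((v (n - i * K) : ℂ) *
                Complex.exp (2 * Real.pi * Complex.I * ((k : ℕ) : ℂ) * ((n - i * (K : ℤ) : ℤ) : ℂ) / N)) *
            ((v (n - j * K) : ℂ) *
              Complex.exp (2 * Real.pi * Complex.I * ((l : ℕ) : ℂ) * ((n - j * (K : ℤ) : ℤ) : ℂ) / N))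
          = if k = l ∧ i = j then 1 else 0)
    ↔
    (∀ (n : Fin N) (j : ℤ),
        ∑' i : ℤ, v ((n : ℤ) + i * N) * v ((n : ℤ) + i * N + j * K)
          = if j = 0 then 1 / (N : ℝ) else 0) := by
  have : NeZero N := ⟨hN.ne'⟩
  have hfin : ∀ (n : Fin N) (j : ℤ),
      ∑' i : ℤ, v ((n : ℤ) + i * N) * v ((n : ℤ) + i * N + j * K)
        = foldedCorr N v (j * K) (finResidue N n) := fun n j => by
    simp [foldedCorr, finResidue, ZMod.val_natCast, Nat.mod_eq_of_lt n.2]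
  have hN0 : (N : ℂ) ≠ 0 := by exact_mod_cast hN.ne'
  constructor
  · intro h n d
    have hF : (fun a => (foldedCorr N v (d * K) a : ℂ)) =
        fun _ => if d = 0 then 1 / (N : ℂ) else 0 := by
      apply ZMod.dft.injective
      funext a
      -- With `l = 0` the unimodular factor is trivial and `k` runs over all frequencies.
      have h1 := h ((finResidue N).symm a) 0 d 0
      rw [inner_eq_dft K hv] at h1
      have h2 : (finResidue N).symm a = 0 ↔ a = 0 := by
        rw [Equiv.symm_apply_eq]; simp [finResidue]
      have h3 : ((((finResidue N).symm a : Fin N) : ℕ) : ZMod N) = a :=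
        (finResidue N).apply_symm_apply a
      simp only [h2, h3, Fin.val_zero, Nat.cast_zero, zero_mul, Int.cast_zero, sub_zero,
        AddChar.map_zero_eq_one, one_mul] at h1
      rw [h1, dft_const]
      by_cases ha : a = 0 <;> by_cases hd : d = 0 <;> simp [ha, hd, hN0]
    rw [hfin]
    have h4 := congrFun hF (finResidue N n)
    apply Complex.ofReal_injective
    rw [h4]
    split_ifs <;> simp
  · intro h k l i j
    have hF : (fun a => (foldedCorr N v ((i - j) * K) a : ℂ)) =
        fun _ => if i = j then 1 / (N : ℂ) else 0 := by
      funext a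
      have h1 := h ((finResidue N).symm a) (i - j)
      rw [hfin, Equiv.apply_symm_apply] at h1
      rw [h1]
      simp only [sub_eq_zero]
      split_ifs <;> simp
    have hkl : ((k : ℕ) : ZMod N) - ((l : ℕ) : ZMod N) = 0 ↔ k = l := by
      rw [sub_eq_zero]; exact (finResidue N).injective.eq_iff
    rw [inner_eq_dft K hv, hF, dft_const]
    simp only [hkl]
    by_cases h1 : k = l <;> by_cases h2 : i = j <;> simp [h1, h2, hN0]
end

section
/- Let N, K be positive integers with N ≤ K ≤ 2N, and let v : ℤ → ℝ be supported on {0,…,K−1}. Then the conditions ∑_{i∈ℤ} v[n+iN]·v[n+iN+jK] = (1/N)·δ[j] for all n ∈ {0,…,N−1} and j ∈ ℤ hold if and only if v[n]² + v[n+N]² = 1/N for 0 ≤ n ≤ K−N−1 and v[n]² = 1/N for K−N ≤ n ≤ N−1. -/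
/-!
The support of `v` has length `K`, so a shift by a nonzero multiple of `K` moves it off itself and
every term with `j ≠ 0` vanishes. For `j = 0` and `0 ≤ n < N`, only `i = 0, 1` can put `n + iN`
into `{0,…,K−1} ⊆ {0,…,2N−1}`, so the sum is `v[n]² + v[n+N]²`
(`tsum_shift_zero`), whose second term vanishes once `n ≥ K − N`.
-/

lemma mul_shift_eq_zero {K : ℕ} {v : ℤ → ℝ}
    (hv : ∀ n : ℤ, (n < 0 ∨ (K : ℤ) ≤ n) → v n = 0) {j : ℤ} (hj : j ≠ 0) (m : ℤ) :
    v m * v (m + j * K) = 0 := by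
  by_cases hm : m < 0 ∨ (K : ℤ) ≤ m
  · rw [hv m hm, zero_mul]
  · push Not at hm
    rw [hv (m + j * K), mul_zero]
    rcases lt_or_gt_of_ne hj with h | h
    · left; nlinarith
    · right; nlinarith

lemma tsum_shift_zero {N K : ℕ} (hK2N : K ≤ 2 * N) {v : ℤ → ℝ}
    (hv : ∀ n : ℤ, (n < 0 ∨ (K : ℤ) ≤ n) → v n = 0) {n : ℤ} (h0 : 0 ≤ n) (hn : n ≤ (N : ℤ) - 1) :
    ∑' i : ℤ, v (n + i * N) * v (n + i * N + 0 * K) = v n ^ 2 + v (n + N) ^ 2 := by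
  rw [tsum_eq_sum (s := {0, 1})]
  · rw [Finset.sum_pair (by norm_num)]
    simp [sq]
  · intro i hi
    have hK : (K : ℤ) ≤ 2 * N := by exact_mod_cast hK2N
    rw [hv (n + i * N), zero_mul]
    have hi' : i < 0 ∨ 2 ≤ i := by
      simp only [Finset.mem_insert, Finset.mem_singleton] at hi
      omega
    rcases hi' with h | h
    · left; nlinarith
    · right; nlinarith

/-- Let `N ≤ K ≤ 2N` and let `v : ℤ → ℝ` be supported on
`{0,…,K−1}`.  Then `∑_{i∈ℤ} v[n+iN]·v[n+iN+jK] = (1/N)·δ[j]` for all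
`n ∈ {0,…,N−1}` and `j ∈ ℤ` if and only if
`v[n]² + v[n+N]² = 1/N` for `0 ≤ n ≤ K−N−1` and `v[n]² = 1/N` for
`K−N ≤ n ≤ N−1`. -/
theorem stmt8
    (N K : ℕ) (hN : 0 < N) (hNK : N ≤ K) (hK2N : K ≤ 2 * N)
    (v : ℤ → ℝ) (hv : ∀ n : ℤ, (n < 0 ∨ (K : ℤ) ≤ n) → v n = 0) :
    (∀ n : ℤ, 0 ≤ n → n ≤ (N : ℤ) - 1 → ∀ j : ℤ,
        ∑' i : ℤ, v (n + i * N) * v (n + i * N + j * K)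
          = if j = 0 then 1 / (N : ℝ) else 0)
    ↔
    ((∀ n : ℤ, 0 ≤ n → n ≤ (K : ℤ) - N - 1 → v n ^ 2 + v (n + N) ^ 2 = 1 / (N : ℝ)) ∧
      (∀ n : ℤ, (K : ℤ) - N ≤ n → n ≤ (N : ℤ) - 1 → v n ^ 2 = 1 / (N : ℝ))) := by
  constructor
  · intro h
    have key : ∀ n : ℤ, 0 ≤ n → n ≤ (N : ℤ) - 1 → v n ^ 2 + v (n + N) ^ 2 = 1 / (N : ℝ) := by
      intro n h0 hn
      rw [← tsum_shift_zero hK2N hv h0 hn, h n h0 hn 0, if_pos rfl]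
    refine ⟨fun n h0 hn => key n h0 (by omega), fun n h0 hn => ?_⟩
    have := key n (by omega) hn
    rwa [hv (n + N) (by omega), zero_pow two_ne_zero, add_zero] at this
  · rintro ⟨h1, h2⟩ n h0 hn j
    by_cases hj : j = 0
    · subst hj
      rw [tsum_shift_zero hK2N hv h0 hn, if_pos rfl]
      by_cases hn' : n ≤ (K : ℤ) - N - 1
      · exact h1 n h0 hn'
      · rw [hv (n + N) (by omega), zero_pow two_ne_zero, add_zero]
        exact h2 n (by omega) hn
    · simp only [mul_shift_eq_zero hv hj, tsum_zero, if_neg hj]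
end

section
/- Let N, K be positive integers with N ≤ K ≤ 2N, and let α_0, …, α_{K−N−1} be arbitrary real numbers. Define v : ℤ → ℝ by v[n] = (1/√N)·cos(α_n) for 0 ≤ n ≤ K−N−1, v[n] = 1/√N for K−N ≤ n ≤ N−1, v[n] = (1/√N)·sin(α_{n−N}) for N ≤ n ≤ K−1, and v[n] = 0 otherwise. Then the Weyl–Heisenberg set Φ = {φ_{k,i}} with φ_{k,i}[n] = v[n−iK]·exp(2πi k(n−iK)/N), k ∈ {0,…,N−1}, i ∈ ℤ, is orthonormal. -/
/-!
The window `v` is supported on `[0, K)`, so time shifts by distinct multiples of `K` have disjoint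
supports and the corresponding waveforms are orthogonal. For equal time shifts the inner product is
`∑ m, v[m]² z ^ m` with `z = exp (2πi (l - k) / N)`. Since `z ^ N = 1` and `K ≤ 2N`, the terms
`m` and `m + N` can be grouped, and `v[m]² + v[m+N]² = 1/N` for `0 ≤ m < N` because
`cos² + sin² = 1` (`window_fold`). What remains is `1/N` times the sum of `z ^ m` over
`0 ≤ m < N`, which is `1` when `k = l` and vanishes otherwise (`sum_modulation`).
-/

open Complex

lemma window_eq_zero {N K : ℕ} (hNK : N ≤ K) {α v : ℤ → ℝ}
    (hv : ∀ n : ℤ,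
        v n =
          if 0 ≤ n ∧ n ≤ (K : ℤ) - N - 1 then (1 / Real.sqrt N) * Real.cos (α n)
          else if (K : ℤ) - N ≤ n ∧ n ≤ (N : ℤ) - 1 then 1 / Real.sqrt N
          else if (N : ℤ) ≤ n ∧ n ≤ (K : ℤ) - 1 then (1 / Real.sqrt N) * Real.sin (α (n - N))
          else 0) (n : ℤ) (hn : ¬ (0 ≤ n ∧ n < K)) : v n = 0 := by
  rw [hv, if_neg (by omega), if_neg (by omega), if_neg (by omega)]

/-- The squared window folded modulo `N` is constant; `K ≤ 2N` ensures that the cosine and sine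
tapers do not overlap. -/
lemma window_fold {N K : ℕ} (hNK : N ≤ K) (hK2N : K ≤ 2 * N) {α v : ℤ → ℝ}
    (hv : ∀ n : ℤ,
        v n =
          if 0 ≤ n ∧ n ≤ (K : ℤ) - N - 1 then (1 / Real.sqrt N) * Real.cos (α n)
          else if (K : ℤ) - N ≤ n ∧ n ≤ (N : ℤ) - 1 then 1 / Real.sqrt N
          else if (N : ℤ) ≤ n ∧ n ≤ (K : ℤ) - 1 then (1 / Real.sqrt N) * Real.sin (α (n - N))
          else 0) (m : ℕ) (hm : m < N) :
    v m ^ 2 + v ((m + N : ℕ) : ℤ) ^ 2 = 1 / N := by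
  have hs : (1 / Real.sqrt N) ^ 2 = 1 / (N : ℝ) := by
    rw [div_pow, Real.sq_sqrt (Nat.cast_nonneg N), one_pow]
  by_cases h : m + N < K
  · rw [hv m, if_pos (by omega), hv, if_neg (by omega), if_neg (by omega), if_pos (by omega)]
    have e : ((m + N : ℕ) : ℤ) - N = m := by push_cast; ring
    rw [e, mul_pow, mul_pow, ← mul_add, Real.cos_sq_add_sin_sq, hs, mul_one]
  · rw [window_eq_zero hNK hv ((m + N : ℕ) : ℤ) (by omega), hv m, if_neg (by omega),
      if_pos (by omega), hs]
    ring

lemma modulation_pow {N : ℕ} (hN : 0 < N) (k l : Fin N) :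
    Complex.exp (2 * Real.pi * Complex.I * (((l : ℕ) : ℂ) - ((k : ℕ) : ℂ)) / N) ^ N = 1 := by
  have hN' : (N : ℂ) ≠ 0 := by exact_mod_cast hN.ne'
  rw [← Complex.exp_nat_mul, Complex.exp_eq_one_iff]
  refine ⟨(l : ℕ) - (k : ℕ), ?_⟩
  push_cast
  field_simp

/-- Orthogonality of the characters of `ℤ/N`. -/
lemma sum_modulation {N : ℕ} (hN : 0 < N) (k l : Fin N) :
    ∑ m ∈ Finset.range N,
      Complex.exp (2 * Real.pi * Complex.I * (((l : ℕ) : ℂ) - ((k : ℕ) : ℂ)) / N) ^ m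
      = if k = l then (N : ℂ) else 0 := by
  split_ifs with h
  · subst h
    simp
  · have hN' : (N : ℂ) ≠ 0 := by exact_mod_cast hN.ne'
    have hz : Complex.exp (2 * Real.pi * Complex.I * (((l : ℕ) : ℂ) - ((k : ℕ) : ℂ)) / N) ≠ 1 := by
      rw [Ne, Complex.exp_eq_one_iff]
      rintro ⟨n, hn⟩
      have hpi := Complex.two_pi_I_ne_zero
      have h1 : (2 * Real.pi * Complex.I) * (((l : ℕ) : ℂ) - ((k : ℕ) : ℂ))
          = (2 * Real.pi * Complex.I) * (n * N) := by
        rw [div_eq_iff hN'] at hn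
        rw [hn]; ring
      have h2 : ((l : ℕ) : ℤ) - ((k : ℕ) : ℤ) = n * N := by
        exact_mod_cast mul_left_cancel₀ hpi h1
      -- A multiple of `N` of absolute value less than `N` is zero.
      have h3 : ((l : ℕ) : ℤ) - ((k : ℕ) : ℤ) = 0 :=
        Int.eq_zero_of_abs_lt_dvd (m := (N : ℤ)) ⟨n, by rw [h2, mul_comm]⟩
          (by rw [abs_lt]; have := k.2; have := l.2; constructor <;> omega)
      exact h (Fin.ext (by omega))
    rw [geom_sum_eq hz, modulation_pow hN, sub_self, zero_div]

/-- Let `N ≤ K ≤ 2N` and let `α_0, …, α_{K−N−1}` be arbitrary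
real numbers.  Define `v[n] = (1/√N)·cos(α_n)` for `0 ≤ n ≤ K−N−1`,
`v[n] = 1/√N` for `K−N ≤ n ≤ N−1`, `v[n] = (1/√N)·sin(α_{n−N})` for
`N ≤ n ≤ K−1`, and `v[n] = 0` otherwise.  Then the Weyl–Heisenberg set
`Φ = {φ_{k,i}[n] = v[n−iK]·exp(2πi k(n−iK)/N)}` is orthonormal. -/
theorem stmt9
    (N K : ℕ) (hN : 0 < N) (hNK : N ≤ K) (hK2N : K ≤ 2 * N)
    (α : ℤ → ℝ) (v : ℤ → ℝ)
    (hv : ∀ n : ℤ,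
        v n =
          if 0 ≤ n ∧ n ≤ (K : ℤ) - N - 1 then (1 / Real.sqrt N) * Real.cos (α n)
          else if (K : ℤ) - N ≤ n ∧ n ≤ (N : ℤ) - 1 then 1 / Real.sqrt N
          else if (N : ℤ) ≤ n ∧ n ≤ (K : ℤ) - 1 then (1 / Real.sqrt N) * Real.sin (α (n - N))
          else 0) :
    ∀ (k l : Fin N) (i j : ℤ),
      ∑' n : ℤ,
        (starRingEnd ℂ)
            ((v (n - i * K) : ℂ) *
              Complex.exp (2 * Real.pi * Complex.I * ((k : ℕ) : ℂ) * ((n - i * (K : ℤ) : ℤ) : ℂ) / N)) *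
          ((v (n - j * K) : ℂ) *
            Complex.exp (2 * Real.pi * Complex.I * ((l : ℕ) : ℂ) * ((n - j * (K : ℤ) : ℤ) : ℂ) / N))
        = if k = l ∧ i = j then 1 else 0 := by
  intro k l i j
  by_cases hij : i = j
  · subst hij
    set z : ℂ := Complex.exp (2 * Real.pi * Complex.I * (((l : ℕ) : ℂ) - ((k : ℕ) : ℂ)) / N) with hz
    have hzN : z ^ N = 1 := modulation_pow hN k l
    have hterm : ∀ n : ℤ, (starRingEnd ℂ)
            ((v (n - i * K) : ℂ) *
              Complex.exp (2 * Real.pi * Complex.I * ((k : ℕ) : ℂ) * ((n - i * (K : ℤ) : ℤ) : ℂ) / N)) *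
          ((v (n - i * K) : ℂ) *
            Complex.exp (2 * Real.pi * Complex.I * ((l : ℕ) : ℂ) * ((n - i * (K : ℤ) : ℤ) : ℂ) / N))
        = (fun m : ℤ => ((v m ^ 2 : ℝ) : ℂ) * z ^ m) (Equiv.subRight (i * (K : ℤ)) n) := by
      intro n
      simp only [Equiv.subRight_apply]
      generalize n - i * (K : ℤ) = m
      rw [map_mul, Complex.conj_ofReal, ← Complex.exp_conj, hz, ← Complex.exp_int_mul,
        mul_mul_mul_comm, ← Complex.exp_add, Complex.ofReal_pow, sq]
      congr 2
      simp only [map_div₀, map_mul, Complex.conj_ofReal, Complex.conj_I, map_natCast, map_intCast,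
        map_ofNat]
      ring
    rw [tsum_congr hterm, Equiv.tsum_eq (Equiv.subRight (i * (K : ℤ)))
      (fun m : ℤ => ((v m ^ 2 : ℝ) : ℂ) * z ^ m)]
    have hsupp : Function.support (fun m : ℤ => ((v m ^ 2 : ℝ) : ℂ) * z ^ m)
        ⊆ Set.range (Nat.cast : ℕ → ℤ) := by
      intro m hm
      by_contra hneg
      apply hm
      have : ¬ 0 ≤ m := fun h => hneg ⟨m.toNat, Int.toNat_of_nonneg h⟩
      simp [window_eq_zero hNK hv m (by omega)]
    rw [← Function.Injective.tsum_eq Nat.cast_injective hsupp,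
      tsum_eq_sum (s := Finset.range (N + N))]
    · rw [Finset.sum_range_add, ← Finset.sum_add_distrib]
      have hfold : ∀ m ∈ Finset.range N,
          ((v (m : ℤ) ^ 2 : ℝ) : ℂ) * z ^ (m : ℤ)
            + ((v ((N + m : ℕ) : ℤ) ^ 2 : ℝ) : ℂ) * z ^ ((N + m : ℕ) : ℤ) = 1 / (N : ℂ) * z ^ m := by
        intro m hm
        rw [zpow_natCast, zpow_natCast, pow_add, hzN, one_mul, ← add_mul, ← Complex.ofReal_add,
          add_comm N m, window_fold hNK hK2N hv m (Finset.mem_range.mp hm)]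
        push_cast
        rfl
      rw [Finset.sum_congr rfl hfold, ← Finset.mul_sum, sum_modulation hN k l]
      have hN' : (N : ℂ) ≠ 0 := by exact_mod_cast hN.ne'
      by_cases hkl : k = l <;> simp [hkl, hN']
    · intro m hm
      rw [Finset.mem_range] at hm
      simp [window_eq_zero hNK hv (m : ℤ) (by omega)]
  · rw [if_neg (fun h => hij h.2)]
    rw [← tsum_zero (α := ℂ) (β := ℤ)]
    refine tsum_congr fun n => ?_
    by_cases h1 : 0 ≤ n - i * K ∧ n - i * K < K
    · have h2 : ¬ (0 ≤ n - j * K ∧ n - j * K < K) := by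
        intro h2
        -- Both `i` and `j` would be the quotient of `n` by `K`.
        have hK : (0 : ℤ) < K := by omega
        have hi : i < j + 1 := lt_of_mul_lt_mul_right (a := (K : ℤ)) (by linarith) hK.le
        have hj : j < i + 1 := lt_of_mul_lt_mul_right (a := (K : ℤ)) (by linarith) hK.le
        omega
      rw [window_eq_zero hNK hv _ h2]
      simp
    · rw [window_eq_zero hNK hv _ h1]
      simp
end

section
/- Let N, K be positive integers with K ≥ N, and let v : ℤ → ℂ be finitely supported. The Weyl–Heisenberg set Φ = {φ_{k,i}} with φ_{k,i}[n] = v[n−iK]·exp(2πi k(n−iK)/N), k ∈ {0,…,N−1}, i ∈ ℤ, is orthonormal if and only if the Weyl–Heisenberg set Ξ = {ξ_{k,i}} with ξ_{k,i}[n] = v[n−iN]·exp(2πi k(n−iN)/K), k ∈ {0,…,K−1}, i ∈ ℤ, is a tight frame for ℓ²(ℤ) with frame bound K/N, i.e. ∑_{k=0}^{K−1} ∑_{i∈ℤ} |⟨x, ξ_{k,i}⟩|² = (K/N)·‖x‖² for every x ∈ ℓ²(ℤ). -/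
open Complex

/-!
This is the Ron–Shen / Wexler–Raz duality for finitely supported windows. Both properties are
equivalent to one time-domain condition, `DualCond`: for every multiple `d` of `K`, the
`N`-periodization of `n ↦ conj (v n) * v (n - d)` is identically `δ[d] / N`.

* Orthonormality (`gram_iff`): summing over residue classes modulo `N` shows that the inner
  products of the elements of `Φ` are, up to unimodular factors, the discrete Fourier coefficients
  of these periodizations (`gram_eq`). Fourier inversion on `ℤ/N` concludes.
* `DualCond` implies the tight frame identity (`frame_of_dual`): the frame coefficients of `x` are
  finite sums over the support of `v`. Summing their squares over `k` by Parseval on `ℤ/K` leaves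
  the pairs `(t, s)` of support points with `d = t - s` divisible by `K`. For each such `d`, summing
  over the translations pairs `conj (v t) * v (t - d)` with an `N`-periodic function of `t`, so that
  `DualCond` kills `d ≠ 0` and turns `d = 0` into `‖x‖² / N`.
* Conversely (`dual_of_frame`), testing the frame identity on `δ_a + w δ_b` with `a ≡ b` modulo `K`
  gives the diagonal value `1 / N` for `w = 0`, and then forces the cross term to vanish when `w` is
  chosen to be that cross term.
-/

/-! ### Characters of `ℤ/q` -/

/-- The character `a ↦ exp(2πi a/q)` of `ℤ`, of period `q`. -/
noncomputable def chi (q : ℕ) (a : ℤ) : ℂ := Complex.exp (2 * Real.pi * Complex.I * a / q)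

lemma chi_add (q : ℕ) (a b : ℤ) : chi q (a + b) = chi q a * chi q b := by
  unfold chi
  rw [← Complex.exp_add]
  push_cast
  ring_nf

lemma chi_zero (q : ℕ) : chi q 0 = 1 := by simp [chi]

lemma chi_ne_zero (q : ℕ) (a : ℤ) : chi q a ≠ 0 := Complex.exp_ne_zero _

lemma conj_chi (q : ℕ) (a : ℤ) : (starRingEnd ℂ) (chi q a) = chi q (-a) := by
  unfold chi
  rw [← Complex.exp_conj]
  congr 1
  have h2 : (starRingEnd ℂ) 2 = 2 := map_ofNat _ 2
  simp [h2]

lemma norm_chi (q : ℕ) (a : ℤ) : ‖chi q a‖ = 1 := by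
  have h : (starRingEnd ℂ) (chi q a) * chi q a = 1 := by
    rw [conj_chi, ← chi_add, neg_add_cancel, chi_zero]
  rw [Complex.conj_mul'] at h
  have h' : ‖chi q a‖ ^ 2 = 1 := by exact_mod_cast h
  nlinarith [norm_nonneg (chi q a)]

lemma chi_natCast_mul (q : ℕ) (k : ℕ) (a : ℤ) : chi q (k * a) = chi q a ^ k := by
  unfold chi
  rw [← Complex.exp_nat_mul]
  push_cast
  ring_nf

lemma chi_eq_one_iff {q : ℕ} (hq : 0 < q) (a : ℤ) : chi q a = 1 ↔ (q : ℤ) ∣ a := by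
  have hq' : (q : ℂ) ≠ 0 := by exact_mod_cast hq.ne'
  unfold chi
  rw [Complex.exp_eq_one_iff]
  constructor
  · rintro ⟨n, hn⟩
    refine ⟨n, ?_⟩
    rw [div_eq_iff hq'] at hn
    have h2 : (2 * Real.pi * Complex.I : ℂ) * (a : ℂ) = (2 * Real.pi * Complex.I : ℂ) * (q * n) := by
      rw [hn]; ring
    have := mul_left_cancel₀ Complex.two_pi_I_ne_zero h2
    exact_mod_cast this
  · rintro ⟨n, rfl⟩
    refine ⟨n, ?_⟩
    push_cast
    field_simp

/-- Orthogonality of the characters of `ℤ/q`. -/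
lemma sum_chi {q : ℕ} (hq : 0 < q) (a : ℤ) :
    ∑ k : Fin q, chi q ((k : ℕ) * a) = if (q : ℤ) ∣ a then (q : ℂ) else 0 := by
  rw [Fin.sum_univ_eq_sum_range (fun k : ℕ => chi q (k * a)) q]
  simp_rw [chi_natCast_mul]
  split_ifs with h
  · simp [(chi_eq_one_iff hq a).2 h]
  · have h1 := mul_geom_sum (chi q a) q
    rw [← chi_natCast_mul, (chi_eq_one_iff hq _).2 (dvd_mul_right _ _), sub_self] at h1
    refine (mul_eq_zero.1 h1).resolve_left ?_
    exact fun h2 => h ((chi_eq_one_iff hq a).1 (sub_eq_zero.1 h2))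

/-- Parseval's identity on `ℤ/K` for a finitely supported sequence, whose Fourier transform only
sees the sums of `c` over residue classes modulo `K`. -/
lemma parseval {K : ℕ} (hK : 0 < K) (S : Finset ℤ) (c : ℤ → ℂ) :
    ∑ k : Fin K, (starRingEnd ℂ) (∑ s ∈ S, c s * chi K ((k : ℕ) * s)) *
        ∑ s ∈ S, c s * chi K ((k : ℕ) * s)
      = K * ∑ t ∈ S, ∑ s ∈ S, if (K : ℤ) ∣ t - s then (starRingEnd ℂ) (c t) * c s else 0 := by
  simp_rw [map_sum, Finset.sum_mul_sum]
  rw [Finset.sum_comm, Finset.mul_sum]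
  refine Finset.sum_congr rfl fun t _ => ?_
  rw [Finset.sum_comm, Finset.mul_sum]
  refine Finset.sum_congr rfl fun s _ => ?_
  have h : ∀ k : Fin K, (starRingEnd ℂ) (c t * chi K ((k : ℕ) * t)) * (c s * chi K ((k : ℕ) * s))
      = (starRingEnd ℂ) (c t) * c s * chi K ((k : ℕ) * (s - t)) := fun k => by
    rw [map_mul, conj_chi, mul_sub, sub_eq_add_neg, chi_add]
    ring
  simp_rw [h]
  rw [← Finset.mul_sum, sum_chi hK]
  simp only [dvd_sub_comm (b := s)]
  split_ifs <;> ring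

/-! ### Periodization -/

/-- Summation over `ℤ` by residue classes modulo `N`. -/
lemma tsum_residues {N : ℕ} (hN : 0 < N) {h : ℤ → ℂ} (hh : Summable h) :
    ∑' n, h n = ∑ r : Fin N, ∑' i : ℤ, h ((r : ℕ) + i * N) := by
  have : NeZero N := ⟨hN.ne'⟩
  let e : Fin N × ℤ ≃ ℤ := (Equiv.prodComm _ _).trans (Int.divModEquiv N).symm
  have he : ∀ p, e p = (p.1 : ℕ) + p.2 * N := fun p => by
    simp [e, add_comm]
  have hs : Summable fun p => h (e p) := e.summable_iff.2 hh
  rw [← e.tsum_eq h, hs.tsum_prod, tsum_fintype]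
  simp_rw [he]

lemma summable_progression {N : ℕ} (hN : 0 < N) {h : ℤ → ℂ} (hh : Summable h) (s : ℤ) :
    Summable fun i : ℤ => h (s + i * N) := by
  refine hh.comp_injective (i := fun i : ℤ => s + i * N) fun i j hij => ?_
  simpa [hN.ne'] using hij

/-- If the `N`-periodization of the finitely supported `f` is the constant `c`, then pairing `f` with the
`N`-periodization of `g` gives `c` times the total sum of `g`. -/
lemma pair_periodization {N : ℕ} (hN : 0 < N) (S : Finset ℤ) {f g : ℤ → ℂ}
    (hf : ∀ s, s ∉ S → f s = 0) (hg : Summable g) {c : ℂ}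
    (hc : ∀ r : Fin N, ∑' i : ℤ, f ((r : ℕ) + i * N) = c) :
    ∑ s ∈ S, f s * ∑' i : ℤ, g (s + i * N) = c * ∑' n, g n := by
  have hper : ∀ s j : ℤ, ∑' i : ℤ, g (s + j * N + i * N) = ∑' i : ℤ, g (s + i * N) := fun s j => by
    rw [← (Equiv.addLeft j).tsum_eq (fun i : ℤ => g (s + i * N))]
    refine tsum_congr fun i => ?_
    simp only [Equiv.coe_addLeft]
    ring_nf
  have hz : ∀ s, s ∉ S → f s * ∑' i : ℤ, g (s + i * N) = 0 := fun s hs => by simp [hf s hs]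
  rw [← tsum_eq_sum (L := .unconditional ℤ) hz, tsum_residues hN (summable_of_ne_finset_zero hz),
    tsum_residues hN hg, Finset.mul_sum]
  refine Finset.sum_congr rfl fun r _ => ?_
  simp_rw [hper]
  rw [tsum_mul_right, hc]

/-- The time-domain condition to which both sides of the duality reduce: for each multiple `d` of
`K`, the `N`-periodization of `n ↦ conj (v n) * v (n - d)` is the constant `δ[d] / N`. -/
def DualCond (N K : ℕ) (v : ℤ → ℂ) : Prop :=
  ∀ d : ℤ, (K : ℤ) ∣ d → ∀ r : Fin N,
    ∑' i : ℤ, (starRingEnd ℂ) (v ((r : ℕ) + i * N)) * v ((r : ℕ) + i * N - d)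
      = if d = 0 then (1 / N : ℂ) else 0

/-! ### Orthonormality -/

/-- The Gram matrix entries of `Φ` are, up to a unimodular factor, discrete Fourier coefficients of
the periodizations appearing in `DualCond`. -/
lemma gram_eq {N : ℕ} (hN : 0 < N) (K : ℕ) {v : ℤ → ℂ} (hv : (Function.support v).Finite)
    (k l : ℕ) (i j : ℤ) :
    ∑' n : ℤ, (starRingEnd ℂ) (v (n - i * K) * chi N (k * (n - i * K))) *
        (v (n - j * K) * chi N (l * (n - j * K)))
      = chi N (-(l * ((j - i) * K))) * ∑ r : Fin N, chi N ((l - k) * (r : ℕ)) *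
          ∑' t : ℤ, (starRingEnd ℂ) (v ((r : ℕ) + t * N)) * v ((r : ℕ) + t * N - (j - i) * K) := by
  rw [← (Equiv.addRight (i * K : ℤ)).tsum_eq]
  have h1 : ∀ n : ℤ, (starRingEnd ℂ) (v (n + i * K - i * K) * chi N (k * (n + i * K - i * K))) *
        (v (n + i * K - j * K) * chi N (l * (n + i * K - j * K)))
      = chi N (-(l * ((j - i) * K))) *
        (chi N ((l - k) * n) * ((starRingEnd ℂ) (v n) * v (n - (j - i) * K))) := fun n => by
    rw [map_mul, conj_chi]
    have e1 : n + i * K - i * K = n := by ring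
    have e2 : n + i * K - j * K = n - (j - i) * K := by ring
    rw [e1, e2]
    have e3 : chi N (-(k * n)) * chi N (l * (n - (j - i) * K)) =
        chi N (-(l * ((j - i) * K))) * chi N ((l - k) * n) := by
      rw [← chi_add, ← chi_add]
      congr 1
      ring
    linear_combination ((starRingEnd ℂ) (v n) * v (n - (j - i) * K)) * e3
  simp only [Equiv.coe_addRight, h1]
  rw [tsum_mul_left, tsum_residues hN]
  · congr 1
    refine Finset.sum_congr rfl fun r _ => ?_
    rw [← tsum_mul_left]
    refine tsum_congr fun t => ?_
    have : chi N ((l - k) * ((r : ℕ) + t * N)) = chi N ((l - k) * (r : ℕ)) := by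
      rw [mul_add, chi_add, (chi_eq_one_iff hN ((l - k) * (t * N))).2 ⟨(l - k) * t, by ring⟩, mul_one]
    rw [this]
  · refine summable_of_ne_finset_zero (s := hv.toFinset) fun n hn => ?_
    have : v n = 0 := by simpa using hn
    simp [this]

lemma fin_dvd_sub_iff {N : ℕ} (a b : Fin N) : (N : ℤ) ∣ ((a : ℕ) : ℤ) - ((b : ℕ) : ℤ) ↔ a = b := by
  constructor
  · intro h
    have ha := a.2
    have hb := b.2
    have := Int.eq_zero_of_abs_lt_dvd h (by rw [abs_lt]; constructor <;> omega)
    ext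
    omega
  · rintro rfl
    simp

lemma gram_iff {N K : ℕ} (hN : 0 < N) (hK : 0 < K) {v : ℤ → ℂ}
    (hv : (Function.support v).Finite) :
    (∀ (k l : Fin N) (i j : ℤ),
      ∑' n : ℤ, (starRingEnd ℂ) (v (n - i * K) * chi N ((k : ℕ) * (n - i * K))) *
        (v (n - j * K) * chi N ((l : ℕ) * (n - j * K))) = if k = l ∧ i = j then 1 else 0)
    ↔ DualCond N K v := by
  have hNc : (N : ℂ) ≠ 0 := by exact_mod_cast hN.ne'
  simp_rw [gram_eq hN K hv]
  constructor
  · rintro h d ⟨m, rfl⟩ r₀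
    set B : Fin N → ℂ := fun r => ∑' t : ℤ,
      (starRingEnd ℂ) (v ((r : ℕ) + t * N)) * v ((r : ℕ) + t * N - K * m) with hB
    -- The Fourier coefficients of `B` are read off from the row `k = 0`, `i = 0`, `j = m`.
    have hF : ∀ l : Fin N, ∑ r : Fin N, chi N ((l : ℕ) * (r : ℕ)) * B r
        = if (⟨0, hN⟩ : Fin N) = l ∧ m = 0 then 1 else 0 := fun l => by
      have := h ⟨0, hN⟩ l 0 m
      simp only [sub_zero, Nat.cast_zero, mul_comm m (K : ℤ)] at this
      change _ * ∑ r : Fin N, chi N ((l : ℕ) * (r : ℕ)) * B r = _ at this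
      rw [← mul_right_inj' (chi_ne_zero N (-((l : ℕ) * (K * m)))), this]
      by_cases hm : m = 0
      · subst hm
        simp [chi_zero]
      · simp [hm, Ne.symm hm]
    -- Fourier inversion
    have hinv : ∑ l : Fin N, chi N (-((l : ℕ) * (r₀ : ℕ))) *
        ∑ r : Fin N, chi N ((l : ℕ) * (r : ℕ)) * B r = N * B r₀ := by
      simp_rw [Finset.mul_sum]
      rw [Finset.sum_comm]
      have : ∀ r : Fin N, ∑ l : Fin N, chi N (-((l : ℕ) * (r₀ : ℕ))) *
          (chi N ((l : ℕ) * (r : ℕ)) * B r) = if r = r₀ then N * B r else 0 := fun r => by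
        have e : ∀ l : Fin N, chi N (-((l : ℕ) * (r₀ : ℕ))) * (chi N ((l : ℕ) * (r : ℕ)) * B r)
            = chi N ((l : ℕ) * ((r : ℕ) - (r₀ : ℕ))) * B r := fun l => by
          rw [← mul_assoc, ← chi_add]
          congr 2
          ring
        simp_rw [e]
        rw [← Finset.sum_mul, sum_chi hN]
        simp only [fin_dvd_sub_iff]
        split_ifs <;> simp
      simp_rw [this]
      simp
    simp_rw [hF] at hinv
    by_cases hm : m = 0
    · subst hm
      simp [chi_zero] at hinv
      have : B r₀ = 1 / N := by
        rw [eq_div_iff hNc, mul_comm, ← hinv]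
      simpa [hB] using this
    · simp [hm, hN.ne'] at hinv
      simpa [hB, hm, hK.ne'] using hinv
  · intro h k l i j
    simp_rw [h ((j - i) * K) ⟨j - i, by ring⟩]
    by_cases hij : i = j
    · subst hij
      simp only [sub_self, zero_mul, mul_zero, neg_zero, chi_zero, if_true, one_mul, and_true]
      rw [← Finset.sum_mul]
      have := sum_chi hN ((l : ℕ) - (k : ℕ) : ℤ)
      simp_rw [mul_comm _ (((l : ℕ) : ℤ) - ((k : ℕ) : ℤ))] at this
      rw [this]
      simp only [fin_dvd_sub_iff]
      by_cases hkl : k = l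
      · simp [hkl, hNc]
      · simp [hkl, Ne.symm hkl]
    · have : j - i ≠ 0 := sub_ne_zero.2 (Ne.symm hij)
      simp [hij, this, hK.ne']

/-! ### The tight frame identity -/

lemma summable_conj_mul {x y : ℤ → ℂ} (hx : Summable fun n => ‖x n‖ ^ 2)
    (hy : Summable fun n => ‖y n‖ ^ 2) : Summable fun n => (starRingEnd ℂ) (x n) * y n := by
  refine Summable.of_norm_bounded (hx.add hy) fun n => ?_
  rw [norm_mul, RCLike.norm_conj]
  nlinarith [sq_nonneg (‖x n‖ - ‖y n‖), sq_nonneg ‖x n‖, sq_nonneg ‖y n‖]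

lemma frame_of_dual {N K : ℕ} (hN : 0 < N) (hK : 0 < K) {v : ℤ → ℂ}
    (hv : (Function.support v).Finite) (hC : DualCond N K v) (x : ℤ → ℂ)
    (hx : Summable fun n => ‖x n‖ ^ 2) :
    ∑ k : Fin K, ∑' i : ℤ, ‖∑' n : ℤ, (starRingEnd ℂ) (x n) *
        (v (n - i * N) * chi K ((k : ℕ) * (n - i * N)))‖ ^ 2
      = ((K : ℝ) / N) * ∑' n : ℤ, ‖x n‖ ^ 2 := by
  set S := hv.toFinset with hS
  have hvS : ∀ s, s ∉ S → v s = 0 := fun s hs => by simpa [hS] using hs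
  -- The frame coefficients as finite sums over the support of `v`.
  have hcoef : ∀ (k : Fin K) (i : ℤ), ∑' n : ℤ, (starRingEnd ℂ) (x n) *
      (v (n - i * N) * chi K ((k : ℕ) * (n - i * N)))
      = ∑ s ∈ S, ((starRingEnd ℂ) (x (s + i * N)) * v s) * chi K ((k : ℕ) * s) := fun k i => by
    rw [← (Equiv.addRight (i * N : ℤ)).tsum_eq, tsum_eq_sum (s := S)]
    · refine Finset.sum_congr rfl fun s _ => ?_
      simp only [Equiv.coe_addRight, add_sub_cancel_right]
      ring
    · intro s hs
      simp [hvS s hs]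
  have hxs : ∀ s : ℤ, Summable fun n => ‖x (n + s)‖ ^ 2 := fun s =>
    (Equiv.addRight s).summable_iff.2 hx
  have hprod : ∀ t s : ℤ, Summable fun i : ℤ => x (t + i * N) * (starRingEnd ℂ) (x (s + i * N)) :=
    fun t s => by
      have := summable_progression hN (summable_conj_mul (hxs s) (hxs t)) 0
      refine this.congr fun i => ?_
      rw [mul_comm]
      ring_nf
  have hterm : ∀ (t s : ℤ) (c : ℂ), Summable fun i : ℤ =>
      (starRingEnd ℂ) ((starRingEnd ℂ) (x (t + i * N)) * v t) *
        ((starRingEnd ℂ) (x (s + i * N)) * v s) * c := fun t s c => by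
    refine ((hprod t s).mul_left ((starRingEnd ℂ) (v t) * v s * c)).congr fun i => ?_
    simp only [map_mul, Complex.conj_conj]
    ring
  have hsum : ∀ k : Fin K, Summable fun i : ℤ =>
      (starRingEnd ℂ) (∑ s ∈ S, ((starRingEnd ℂ) (x (s + i * N)) * v s) * chi K ((k : ℕ) * s)) *
      ∑ s ∈ S, ((starRingEnd ℂ) (x (s + i * N)) * v s) * chi K ((k : ℕ) * s) := fun k => by
    simp_rw [map_sum, Finset.sum_mul_sum]
    refine summable_sum fun t _ => summable_sum fun s _ => ?_
    refine (hterm t s (chi K (-((k : ℕ) * t)) * chi K ((k : ℕ) * s))).congr fun i => ?_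
    simp only [map_mul, conj_chi]
    ring
  have hreal : ((∑ k : Fin K, ∑' i : ℤ, ‖∑' n : ℤ, (starRingEnd ℂ) (x n) *
        (v (n - i * N) * chi K ((k : ℕ) * (n - i * N)))‖ ^ 2 : ℝ) : ℂ)
      = ((((K : ℝ) / N) * ∑' n : ℤ, ‖x n‖ ^ 2 : ℝ) : ℂ) := by
    simp_rw [hcoef]
    push_cast
    simp_rw [← Complex.conj_mul']
    rw [← Summable.tsum_finsetSum fun k _ => hsum k]
    simp_rw [parseval hK S]
    rw [tsum_mul_left, div_mul_eq_mul_div, mul_div_assoc]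
    congr 1
    -- Group the pairs `(t, s)` by their difference `d = t - s`.
    set D : Finset ℤ := insert 0 ((S ×ˢ S).image fun p => p.1 - p.2) with hD
    have hdiff : ∀ i : ℤ, ∑ t ∈ S, ∑ s ∈ S, (if (K : ℤ) ∣ t - s then
          (starRingEnd ℂ) ((starRingEnd ℂ) (x (t + i * N)) * v t) *
            ((starRingEnd ℂ) (x (s + i * N)) * v s) else 0)
        = ∑ d ∈ D, if (K : ℤ) ∣ d then ∑ t ∈ S, ((starRingEnd ℂ) (v t) * v (t - d)) *
            (x (t + i * N) * (starRingEnd ℂ) (x (t + i * N - d))) else 0 := fun i => by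
      have h1 : ∀ t ∈ S, ∑ s ∈ S, (if (K : ℤ) ∣ t - s then
          (starRingEnd ℂ) ((starRingEnd ℂ) (x (t + i * N)) * v t) *
            ((starRingEnd ℂ) (x (s + i * N)) * v s) else 0)
          = ∑ d ∈ D, if (K : ℤ) ∣ d then ((starRingEnd ℂ) (v t) * v (t - d)) *
            (x (t + i * N) * (starRingEnd ℂ) (x (t + i * N - d))) else 0 := fun t ht => by
        refine Finset.sum_of_injOn (fun s => t - s) ?_ ?_ ?_ ?_
        · intro a _ b _ hab
          simpa using hab
        · intro s hs
          simp only [hD, Finset.coe_insert, Set.mem_insert_iff]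
          exact Or.inr (Finset.mem_coe.2 (Finset.mem_image.2
            ⟨(t, s), Finset.mem_product.2 ⟨ht, hs⟩, rfl⟩))
        · intro d _ hd
          have : v (t - d) = 0 := hvS _ fun h => hd ⟨t - d, h, by simp⟩
          simp [this]
        · intro s _
          have e1 : t - (t - s) = s := by ring
          have e2 : t + i * N - (t - s) = s + i * N := by ring
          simp only [e1, e2, map_mul, Complex.conj_conj]
          split_ifs
          · ring
          · rfl
      rw [Finset.sum_congr rfl h1, Finset.sum_comm]
      refine Finset.sum_congr rfl fun d _ => ?_
      split_ifs <;> simp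
    simp_rw [hdiff]
    have hg : ∀ d : ℤ, Summable fun n => x n * (starRingEnd ℂ) (x (n - d)) := fun d => by
      refine (summable_conj_mul (hxs (-d)) hx).congr fun n => ?_
      rw [mul_comm, sub_eq_add_neg]
    have hgs : ∀ d t : ℤ, Summable fun i : ℤ => ((starRingEnd ℂ) (v t) * v (t - d)) *
        (x (t + i * N) * (starRingEnd ℂ) (x (t + i * N - d))) := fun d t =>
      (summable_progression hN (hg d) t).mul_left _
    have hval : ∀ d ∈ D, ∑' i : ℤ, (if (K : ℤ) ∣ d then
          ∑ t ∈ S, ((starRingEnd ℂ) (v t) * v (t - d)) *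
            (x (t + i * N) * (starRingEnd ℂ) (x (t + i * N - d))) else 0)
        = if d = 0 then (1 / N : ℂ) * ∑' n, x n * (starRingEnd ℂ) (x n) else 0 := fun d _ => by
      by_cases hd : (K : ℤ) ∣ d
      · simp only [hd, if_true]
        rw [Summable.tsum_finsetSum fun t _ => hgs d t]
        simp_rw [tsum_mul_left]
        rw [pair_periodization hN S (f := fun t => (starRingEnd ℂ) (v t) * v (t - d))
          (g := fun n => x n * (starRingEnd ℂ) (x (n - d))) (fun s hs => by simp [hvS s hs])
          (hg d) (hC d hd)]
        by_cases h0 : d = 0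
        · simp [h0]
        · simp [h0]
      · have : d ≠ 0 := fun h => hd (h ▸ dvd_zero _)
        simp [hd, this]
    rw [Summable.tsum_finsetSum, Finset.sum_congr rfl hval]
    · rw [Finset.sum_ite_eq' D (0 : ℤ), if_pos (Finset.mem_insert_self _ _)]
      simp_rw [Complex.mul_conj', Complex.conj_mul']
      ring
    · intro d _
      split_ifs
      · exact summable_sum fun t _ => hgs d t
      · exact summable_zero
  exact_mod_cast hreal

/-- The tight frame identity tested on the vector `δ_a + w δ_b` with `a ≡ b` modulo `K`. All
modulations act on both entries by the same phase. -/
lemma frame_test {N K : ℕ} (hK : 0 < K) {v : ℤ → ℂ}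
    (hF : ∀ x : ℤ → ℂ, Summable (fun n => ‖x n‖ ^ 2) →
      ∑ k : Fin K, ∑' i : ℤ, ‖∑' n : ℤ, (starRingEnd ℂ) (x n) *
        (v (n - i * N) * chi K ((k : ℕ) * (n - i * N)))‖ ^ 2
      = ((K : ℝ) / N) * ∑' n : ℤ, ‖x n‖ ^ 2)
    {a b : ℤ} (hab : a ≠ b) (hd : (K : ℤ) ∣ a - b) (w : ℂ) :
    ∑' i : ℤ, ‖v (a - i * N) + (starRingEnd ℂ) w * v (b - i * N)‖ ^ 2 = (1 + ‖w‖ ^ 2) / N := by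
  have hKr : (K : ℝ) ≠ 0 := by exact_mod_cast hK.ne'
  set x : ℤ → ℂ := fun n => if n = a then 1 else if n = b then w else 0 with hx
  have hxa : x a = 1 := by simp [hx]
  have hxb : x b = w := by simp [hx, hab.symm]
  have hx0 : ∀ n, n ∉ ({a, b} : Finset ℤ) → x n = 0 := fun n hn => by
    simp only [Finset.mem_insert, Finset.mem_singleton, not_or] at hn
    simp [hx, hn.1, hn.2]
  have h := hF x (summable_of_ne_finset_zero (s := {a, b}) fun n hn => by simp [hx0 n hn])
  rw [tsum_eq_sum (s := {a, b}) (fun n hn => by simp [hx0 n hn]), Finset.sum_pair hab,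
    hxa, hxb] at h
  have hin : ∀ (k : Fin K) (i : ℤ), ‖∑' n : ℤ, (starRingEnd ℂ) (x n) *
        (v (n - i * N) * chi K ((k : ℕ) * (n - i * N)))‖ ^ 2
      = ‖v (a - i * N) + (starRingEnd ℂ) w * v (b - i * N)‖ ^ 2 := fun k i => by
    rw [tsum_eq_sum (s := {a, b}) (fun n hn => by simp [hx0 n hn]), Finset.sum_pair hab, hxa, hxb]
    have hphase : chi K ((k : ℕ) * (a - i * N)) = chi K ((k : ℕ) * (b - i * N)) := by
      have e : ((k : ℕ) : ℤ) * (a - i * N) = (k : ℕ) * (b - i * N) + (k : ℕ) * (a - b) := by ring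
      rw [e, chi_add, (chi_eq_one_iff hK ((k : ℕ) * (a - b))).2 (hd.mul_left _), mul_one]
    rw [hphase, map_one, one_mul, ← mul_assoc, ← add_mul, norm_mul, norm_chi, mul_one]
  simp_rw [hin] at h
  simp only [Finset.sum_const, Finset.card_univ, Fintype.card_fin, nsmul_eq_mul, norm_one,
    one_pow] at h
  rw [div_mul_eq_mul_div, mul_div_assoc] at h
  exact mul_left_cancel₀ hKr h

lemma dual_of_frame {N K : ℕ} (hN : 0 < N) (hK : 0 < K) {v : ℤ → ℂ}
    (hv : (Function.support v).Finite)
    (hF : ∀ x : ℤ → ℂ, Summable (fun n => ‖x n‖ ^ 2) →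
      ∑ k : Fin K, ∑' i : ℤ, ‖∑' n : ℤ, (starRingEnd ℂ) (x n) *
        (v (n - i * N) * chi K ((k : ℕ) * (n - i * N)))‖ ^ 2
      = ((K : ℝ) / N) * ∑' n : ℤ, ‖x n‖ ^ 2) :
    DualCond N K v := by
  have hdiag : ∀ a : ℤ, ∑' i : ℤ, ‖v (a - i * N)‖ ^ 2 = 1 / (N : ℝ) := fun a => by
    have := frame_test hK hF (a := a) (b := a + K) (by simpa using hK.ne') (by simp) 0
    simpa using this
  have hdiagC : ∀ a : ℤ, ∑' i : ℤ, (starRingEnd ℂ) (v (a - i * N)) * v (a - i * N)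
      = 1 / (N : ℂ) := fun a => by
    simp_rw [Complex.conj_mul']
    have := congrArg (fun z : ℝ => (z : ℂ)) (hdiag a)
    simpa [Complex.ofReal_tsum] using this
  have hsm : ∀ a b : ℤ, Summable fun i : ℤ =>
      (starRingEnd ℂ) (v (a - i * N)) * v (b - i * N) := fun a b => by
    have h1 : Summable fun n : ℤ => (starRingEnd ℂ) (v n) * v (n + (b - a)) :=
      summable_of_ne_finset_zero (s := hv.toFinset) fun n hn => by
        have : v n = 0 := by simpa using hn
        simp [this]
    refine ((Equiv.neg ℤ).summable_iff.2 (summable_progression hN h1 a)).congr fun i => ?_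
    simp only [Function.comp_apply, Equiv.neg_apply]
    ring_nf
  intro d hd r
  rw [← (Equiv.neg ℤ).tsum_eq]
  have e1 : ∀ i : ℤ, ((r : ℕ) : ℤ) + -i * N = (r : ℕ) - i * N := fun i => by ring
  have e2 : ∀ i : ℤ, ((r : ℕ) : ℤ) - i * N - d = ((r : ℕ) - d) - i * N := fun i => by ring
  simp only [Equiv.neg_apply, e1, e2]
  set a : ℤ := ((r : ℕ) : ℤ)
  by_cases h0 : d = 0
  · subst h0
    simpa using hdiagC a
  rw [if_neg h0]
  -- The test vector `δ_a + E δ_{a-d}`, with weight the cross term `E` itself, gives `2 |E|² = 0`.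
  set E : ℂ := ∑' i : ℤ, (starRingEnd ℂ) (v (a - i * N)) * v (a - d - i * N) with hE
  have ht := frame_test hK hF (a := a) (b := a - d) (by omega)
    (by simpa using hd) E
  have htC : ∑' i : ℤ, (starRingEnd ℂ) (v (a - i * N) + (starRingEnd ℂ) E * v (a - d - i * N)) *
      (v (a - i * N) + (starRingEnd ℂ) E * v (a - d - i * N))
      = (1 + (starRingEnd ℂ) E * E) / (N : ℂ) := by
    simp_rw [Complex.conj_mul']
    have := congrArg (fun z : ℝ => (z : ℂ)) ht
    simpa [Complex.ofReal_tsum] using this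
  have hconjE : ∑' i : ℤ, (starRingEnd ℂ) (v (a - d - i * N)) * v (a - i * N)
      = (starRingEnd ℂ) E := by
    rw [hE, Complex.conj_tsum]
    refine tsum_congr fun i => ?_
    simp [mul_comm]
  have hexp : ∀ i : ℤ,
      (starRingEnd ℂ) (v (a - i * N) + (starRingEnd ℂ) E * v (a - d - i * N)) *
        (v (a - i * N) + (starRingEnd ℂ) E * v (a - d - i * N))
      = ((starRingEnd ℂ) (v (a - i * N)) * v (a - i * N)
          + (starRingEnd ℂ) E * ((starRingEnd ℂ) (v (a - i * N)) * v (a - d - i * N)))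
        + (E * ((starRingEnd ℂ) (v (a - d - i * N)) * v (a - i * N))
          + (starRingEnd ℂ) E * E *
            ((starRingEnd ℂ) (v (a - d - i * N)) * v (a - d - i * N))) := fun i => by
    simp only [map_add, map_mul, Complex.conj_conj]
    ring
  simp_rw [hexp] at htC
  rw [Summable.tsum_add ((hsm _ _).add ((hsm _ _).mul_left _))
      (((hsm _ _).mul_left _).add ((hsm _ _).mul_left _)),
    Summable.tsum_add (hsm _ _) ((hsm _ _).mul_left _),
    Summable.tsum_add ((hsm _ _).mul_left _) ((hsm _ _).mul_left _),
    tsum_mul_left, tsum_mul_left, tsum_mul_left, hdiagC, hdiagC, hconjE, ← hE] at htC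
  have h2 : (starRingEnd ℂ) E * E = 0 := by
    linear_combination htC / 2
  rw [Complex.conj_mul'] at h2
  simpa using h2

/-- For finitely supported `v : ℤ → ℂ`, the Weyl–Heisenberg set
`Φ = {φ_{k,i}[n] = v[n−iK]·exp(2πi k(n−iK)/N)}` (`k ∈ {0,…,N−1}`, `i ∈ ℤ`) is
orthonormal if and only if the Weyl–Heisenberg set
`Ξ = {ξ_{k,i}[n] = v[n−iN]·exp(2πi k(n−iN)/K)}` (`k ∈ {0,…,K−1}`, `i ∈ ℤ`)
is a tight frame for `ℓ²(ℤ)` with frame bound `K/N`: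
`∑_{k=0}^{K−1} ∑_{i∈ℤ} |⟨x, ξ_{k,i}⟩|² = (K/N)·‖x‖²` for every `x ∈ ℓ²(ℤ)`,
where `⟨x,y⟩ = ∑_{n∈ℤ} conj(x[n])·y[n]` and `‖x‖² = ∑_{n∈ℤ} |x[n]|²`. -/
theorem stmt10
    (N K : ℕ) (hN : 0 < N) (hNK : N ≤ K)
    (v : ℤ → ℂ) (hv : (Function.support v).Finite) :
    (∀ (k l : Fin N) (i j : ℤ),
        ∑' n : ℤ,
          (starRingEnd ℂ)
              (v (n - i * K) *
                Complex.exp (2 * Real.pi * Complex.I * ((k : ℕ) : ℂ) * ((n - i * (K : ℤ) : ℤ) : ℂ) / N)) *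
            (v (n - j * K) *
              Complex.exp (2 * Real.pi * Complex.I * ((l : ℕ) : ℂ) * ((n - j * (K : ℤ) : ℤ) : ℂ) / N))
          = if k = l ∧ i = j then 1 else 0)
    ↔
    (∀ x : ℤ → ℂ, Summable (fun n : ℤ => ‖x n‖ ^ 2) →
        ∑ k : Fin K, ∑' i : ℤ,
            ‖∑' n : ℤ,
                (starRingEnd ℂ) (x n) *
                  (v (n - i * N) *
                    Complex.exp (2 * Real.pi * Complex.I * ((k : ℕ) : ℂ) * ((n - i * (N : ℤ) : ℤ) : ℂ) / K))‖ ^ 2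
          = ((K : ℝ) / N) * ∑' n : ℤ, ‖x n‖ ^ 2) := by
  have hK : 0 < K := hN.trans_le hNK
  have hexp : ∀ (q k : ℕ) (a : ℤ),
      Complex.exp (2 * Real.pi * Complex.I * (k : ℂ) * (a : ℂ) / q) = chi q (k * a) :=
    fun q k a => by
      unfold chi
      push_cast
      ring_nf
  simp only [hexp]
  rw [gram_iff hN hK hv]
  exact ⟨fun h x hx => frame_of_dual hN hK hv h x hx, dual_of_frame hN hK hv⟩
end

section
/- Let N, K be positive integers with K ≥ N. Define v : ℤ → ℂ by v[n] = 1/√N for 0 ≤ n ≤ N−1 and v[n] = 0 otherwise, and define ψ_k[n] = (1/√N)·exp(2πi kn/N) for 0 ≤ n ≤ K−1 and ψ_k[n] = 0 otherwise, and φ_l[n] = v[n]·exp(2πi ln/N). Then for all k, l ∈ {0,…,N−1}, all i, j ∈ ℤ, and every integer d with 0 ≤ d ≤ K−N, if (k,i) ≠ (l,j) then ∑_{n∈ℤ} conj(ψ_k[n−iK])·φ_l[n−jK−d] = 0. -/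
/-!
The pulse `φ_l[· − jK − d]` lives on `jK + d ≤ n ≤ jK + d + N − 1`, which lies inside the `j`-th
block `jK ≤ n ≤ jK + K − 1` because `0 ≤ d ≤ K − N`. For `i ≠ j` the supports are therefore
disjoint. For `i = j` and `k ≠ l` the receive window covers the whole pulse, and the sum is a
constant times `∑_{m < N} ζ ^ m` with `ζ = exp(2πi (l − k)/N)`, an `N`-th root of unity other
than `1`; this geometric sum vanishes (`sum_exp_pow_eq_zero`).
-/


open Complex

lemma sum_exp_pow_eq_zero {N : ℕ} (hN : 0 < N) (k l : Fin N) (hkl : k ≠ l) :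
    ∑ m ∈ Finset.range N,
      Complex.exp (2 * Real.pi * Complex.I * (((l : ℕ) : ℂ) - ((k : ℕ) : ℂ)) / N) ^ m = 0 := by
  have hN0 : (N : ℂ) ≠ 0 := by exact_mod_cast hN.ne'
  have hne : Complex.exp (2 * Real.pi * Complex.I * (((l : ℕ) : ℂ) - ((k : ℕ) : ℂ)) / N) ≠ 1 := by
    intro h
    obtain ⟨z, hz⟩ := Complex.exp_eq_one_iff.mp h
    have hc : (((l : ℕ) : ℂ) - ((k : ℕ) : ℂ)) = z * N := by
      have h2 := Complex.two_pi_I_ne_zero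
      rw [div_eq_iff hN0] at hz
      apply mul_left_cancel₀ h2
      rw [hz]; ring
    have hzint : ((l : ℕ) : ℤ) - ((k : ℕ) : ℤ) = z * N := by exact_mod_cast hc
    have hl := l.isLt
    have hk := k.isLt
    -- `N ∣ l - k` together with `|l - k| < N` forces `l = k`.
    have h0 : ((l : ℕ) : ℤ) - ((k : ℕ) : ℤ) = 0 :=
      Int.eq_zero_of_abs_lt_dvd (m := N) ⟨z, by rw [hzint]; ring⟩ (by rw [abs_lt]; omega)
    exact hkl (Fin.ext (by omega))
  rw [geom_sum_eq hne, ← Complex.exp_nat_mul]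
  have h1 : Complex.exp
      ((N : ℂ) * (2 * Real.pi * Complex.I * (((l : ℕ) : ℂ) - ((k : ℕ) : ℂ)) / N)) = 1 := by
    rw [Complex.exp_eq_one_iff]
    refine ⟨((l : ℕ) : ℤ) - ((k : ℕ) : ℤ), ?_⟩
    push_cast
    field_simp
  rw [h1, sub_self, zero_div]

/-- In the zero-padding OFDM scheme with `N ≤ K`, where
`v[n] = 1/√N` for `0 ≤ n ≤ N−1` (`0` otherwise),
`ψ_k[n] = (1/√N)·exp(2πi kn/N)` for `0 ≤ n ≤ K−1` (`0` otherwise) and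
`φ_l[n] = v[n]·exp(2πi ln/N)`: for all `k, l ∈ {0,…,N−1}`, all `i, j ∈ ℤ` and
every integer `d` with `0 ≤ d ≤ K−N`, if `(k,i) ≠ (l,j)` then
`∑_{n∈ℤ} conj(ψ_k[n−iK])·φ_l[n−jK−d] = 0`. -/
theorem stmt11
    (N K : ℕ) (hN : 0 < N) (hNK : N ≤ K)
    (v : ℤ → ℂ)
    (hv : ∀ n : ℤ, v n = if 0 ≤ n ∧ n ≤ (N : ℤ) - 1 then ((1 / Real.sqrt N : ℝ) : ℂ) else 0)
    (ψ : Fin N → ℤ → ℂ)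
    (hψ : ∀ (k : Fin N) (n : ℤ),
        ψ k n =
          if 0 ≤ n ∧ n ≤ (K : ℤ) - 1 then
            ((1 / Real.sqrt N : ℝ) : ℂ) *
              Complex.exp (2 * Real.pi * Complex.I * ((k : ℕ) : ℂ) * (n : ℂ) / N)
          else 0)
    (φ : Fin N → ℤ → ℂ)
    (hφ : ∀ (l : Fin N) (n : ℤ),
        φ l n = v n * Complex.exp (2 * Real.pi * Complex.I * ((l : ℕ) : ℂ) * (n : ℂ) / N)) :
    ∀ (k l : Fin N) (i j d : ℤ), 0 ≤ d → d ≤ (K : ℤ) - N → (k, i) ≠ (l, j) →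
      ∑' n : ℤ, (starRingEnd ℂ) (ψ k (n - i * K)) * φ l (n - j * K - d) = 0 := by
  intro k l i j d hd0 hdK hne
  by_cases hij : i = j
  · subst hij
    have hkl : k ≠ l := fun h => hne (by rw [h])
    rw [← (Equiv.addRight (i * K + d)).tsum_eq]
    -- After the shift `n = m + iK + d` the summand is supported on `0 ≤ m ≤ N - 1`.
    have hφ0 : ∀ m : ℤ, ¬ (0 ≤ m ∧ m ≤ (N : ℤ) - 1) → φ l m = 0 := by
      intro m hm
      rw [hφ, hv, if_neg hm, zero_mul]
    have hidx' : ∀ m : ℤ, m + (i * K + d) - i * K = m + d := fun m => by ring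
    simp only [Equiv.coe_addRight, hidx', add_sub_cancel_right]
    rw [← (Nat.cast_injective (R := ℤ)).tsum_eq, tsum_eq_sum (s := Finset.range N)]
    · rw [← mul_zero (((1 / Real.sqrt N : ℝ) : ℂ) * ((1 / Real.sqrt N : ℝ) : ℂ) *
        Complex.exp (-(2 * Real.pi * Complex.I * ((k : ℕ) : ℂ) * (d : ℂ) / N))),
        ← sum_exp_pow_eq_zero hN k l hkl, Finset.mul_sum]
      refine Finset.sum_congr rfl fun m hm => ?_
      rw [Finset.mem_range] at hm
      rw [hφ, hv, hψ, if_pos (by omega), if_pos (by omega), map_mul, Complex.conj_ofReal,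
        ← Complex.exp_conj, ← Complex.exp_nat_mul]
      have hconj : (starRingEnd ℂ)
          (2 * Real.pi * Complex.I * ((k : ℕ) : ℂ) * (((m : ℤ) + d : ℤ) : ℂ) / N) =
          -(2 * Real.pi * Complex.I * ((k : ℕ) : ℂ) * ((m : ℂ) + d) / N) := by
        simp [neg_div, Complex.conj_ofNat]
      rw [hconj, mul_mul_mul_comm, mul_assoc (_ * _) (Complex.exp _), ← Complex.exp_add,
        ← Complex.exp_add]
      congr 2
      push_cast
      ring
    · intro m hm
      rw [Finset.mem_range] at hm
      rw [hφ0 m (by omega), mul_zero]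
    · intro m hm
      by_contra hcon
      apply hm
      have : ¬ (0 ≤ m ∧ m ≤ (N : ℤ) - 1) :=
        fun h => hcon ⟨m.toNat, Int.toNat_of_nonneg h.1⟩
      simp only [hφ0 m this, mul_zero]
  · convert tsum_zero with n
    by_cases h : 0 ≤ n - j * K - d ∧ n - j * K - d ≤ (N : ℤ) - 1
    · -- `n` lies in the `j`-th block, hence in no other block.
      have hout : ¬ (0 ≤ n - i * K ∧ n - i * K ≤ (K : ℤ) - 1) := by
        intro h'
        rcases lt_or_gt_of_ne hij with hlt | hlt <;> nlinarith
      rw [hψ, if_neg hout, map_zero, zero_mul]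
    · rw [hφ, hv, if_neg h, zero_mul, mul_zero]
end

section
/- Let N, K be positive integers with K ≥ N, let M = lcm(K,N), P = gcd(N,K), J = N/P, L = K/P, and let w : ℤ → ℂ be finitely supported with polyphase components W_j(z) = ∑_{n∈ℤ} w[−j+nM]·z^{−n} for j = 0,…,M−1. Define the N×K demultiplexer polyphase matrix by [D(z)]_{k,m} = ∑_{n∈ℤ} w[−m+nK]·exp(2πi k(−m+nK)/N)·z^{−n} for 0 ≤ k ≤ N−1, 0 ≤ m ≤ K−1. Then D(z) = F_N^*·W(z), where F_N^* is the conjugate transpose of the matrix [F_N]_{m,k} = exp(2πi mk/N), and W(z) is the N×K matrix whose entry at position (iP+r, jP+r), for i ∈ {0,…,J−1}, j ∈ {0,…,L−1}, r ∈ {0,…,P−1}, equals z^{p}·W_{pK+jP+r}(z^J) where p is the unique integer in {0,…,J−1} with i ≡ pL + j (mod J), and all entries at positions (l,m) with l ≢ m (mod P) are zero. -/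
open Complex

/-!
Write `N = PJ`, `K = PL` with `J`, `L` coprime, so that `M = JK`. Fix a column `m` and an exponent
`n`. The entry of `W(z)` in row `l` contributes to `z^(-n)` exactly when `l ≡ m (mod P)` and
`J ∣ n + p`, and since `i ≡ pL + j (mod J)` with `L` invertible modulo `J`, this amounts to
`l ≡ m - nK (mod N)` (`row_condition_iff`). Hence exactly one row `l ∈ {0,…,N-1}` contributes. In
that row the argument of `w` collapses, by `M = JK`, to `-m + nK`, and the DFT exponential
`exp(-2πi lk/N)` equals `exp(2πi k(-m+nK)/N)` because the two exponents differ by an integer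
multiple of `2πi`.
-/

/-- Row `l` meets both support conditions of column `m` at `z^(-n)` iff `l ≡ m - nK (mod N)`,
where `N = PJ`, `K = PL` and `q` is the index `p` attached to the block position `(l/P, m/P)`. -/
lemma row_condition_iff {P J L : ℤ} (hP : 0 < P) (hc : IsCoprime J L) (l m n q : ℤ)
    (hq : l / P ≡ q * L + m / P [ZMOD J]) :
    (l % P = m % P ∧ J ∣ n + q) ↔ P * J ∣ l - m + n * (P * L) := by
  obtain ⟨t, ht⟩ := hq.dvd
  have hl := Int.emod_add_mul_ediv l P
  have hm := Int.emod_add_mul_ediv m P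
  constructor
  · rintro ⟨hr, s, hs⟩
    exact ⟨s * L - t, by linear_combination hr - hl + hm - P * ht + P * L * hs⟩
  · rintro ⟨s, hs⟩
    have hr : l % P = m % P :=
      Int.emod_eq_emod_iff_emod_sub_eq_zero.2
        (Int.emod_eq_zero_of_dvd ⟨J * s - n * L, by linear_combination hs⟩)
    refine ⟨hr, hc.dvd_of_dvd_mul_right ⟨s + t, ?_⟩⟩
    apply mul_left_cancel₀ hP.ne'
    linear_combination hs + hl - hm - hr + P * ht

/-- Polyphase representation of the OFDM demultiplexer:
`D(z) = F_N^* · W(z)`, stated coefficientwise.  A Laurent polynomial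
`∑ c n · z^(-n)` is represented by its coefficient function `n ↦ c n`.
The `(k,m)` entry of the demultiplexer polyphase matrix `D(z)` has coefficient
`w(−m+nK)·exp(2πi k(−m+nK)/N)` at `z^(-n)`; `F_N^*` is the conjugate transpose
of the `N`-point DFT matrix `[F_N]_{m,k} = exp(2πi mk/N)`, and the `N×K` matrix
`W(z)` has entry `z^p·W_{pK+jP+r}(z^J)` at position `(iP+r, jP+r)` (where `p` is
the unique integer in `{0,…,J−1}` with `i ≡ pL + j (mod J)`, and
`W_j(z) = ∑_n w[−j+nM]·z^(−n)`), with zero entries at positions `(l,m)` with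
`l ≢ m (mod P)`. -/
theorem stmt18
    (N K P J L M : ℕ) (hN : 0 < N) (hNK : N ≤ K)
    (hP : P = Nat.gcd N K) (hJ : J = N / P) (hL : L = K / P) (hM : M = Nat.lcm K N)
    (w : ℤ → ℂ) (hw : (Function.support w).Finite)
    (p : ℤ → ℤ → ℤ)
    (hp : ∀ i j : ℤ, 0 ≤ p i j ∧ p i j < (J : ℤ) ∧ i ≡ p i j * (L : ℤ) + j [ZMOD (J : ℤ)]) :
    ∀ (k : Fin N) (m : Fin K) (n : ℤ),
      -- coefficient of `z^(-n)` in `[D(z)]_{k,m}`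
      w (-(m : ℤ) + n * K) *
          Complex.exp (2 * Real.pi * Complex.I * ((k : ℕ) : ℂ) * ((-(m : ℤ) + n * K : ℤ) : ℂ) / N)
        =
      -- coefficient of `z^(-n)` in `[F_N^* · W(z)]_{k,m}`
      ∑ l : Fin N,
        Complex.exp (-(2 * Real.pi * Complex.I) * ((l : ℕ) : ℂ) * ((k : ℕ) : ℂ) / N) *
          (if ((l : ℤ) % P = (m : ℤ) % P) then
              (if (J : ℤ) ∣ (n + p ((l : ℤ) / P) ((m : ℤ) / P)) then
                w (-(p ((l : ℤ) / P) ((m : ℤ) / P) * K + (m : ℤ))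
                    + ((n + p ((l : ℤ) / P) ((m : ℤ) / P)) / J) * M)
              else 0)
            else 0) := by
  intro k m n
  have hPpos : 0 < P := hP ▸ Nat.gcd_pos_of_pos_left K hN
  have hNP : N = P * J := by
    rw [hJ, Nat.mul_div_cancel' (hP ▸ Nat.gcd_dvd_left N K)]
  have hKP : K = P * L := by
    rw [hL, Nat.mul_div_cancel' (hP ▸ Nat.gcd_dvd_right N K)]
  have hc : IsCoprime (J : ℤ) (L : ℤ) := by
    rw [Nat.isCoprime_iff_coprime, hJ, hL, hP]
    exact Nat.coprime_div_gcd_div_gcd (hP ▸ hPpos)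
  have hMJ : M = J * K := by
    apply Nat.eq_of_mul_eq_mul_left hPpos
    have h := Nat.gcd_mul_lcm K N
    rw [Nat.gcd_comm, ← hP, ← hM] at h
    rw [h, ← mul_assoc, ← hNP, mul_comm]
  have hNZ : (0 : ℤ) < N := by exact_mod_cast hN
  have hNC : (N : ℂ) ≠ 0 := by exact_mod_cast hN.ne'
  have key : ∀ l : Fin N,
      (((l : ℤ) % P = (m : ℤ) % P) ∧ (J : ℤ) ∣ (n + p ((l : ℤ) / P) ((m : ℤ) / P))) ↔
        (N : ℤ) ∣ (l : ℤ) - m + n * K := by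
    intro l
    have h := row_condition_iff (by exact_mod_cast hPpos) hc (l : ℤ) (m : ℤ) n _
      (hp ((l : ℤ) / P) ((m : ℤ) / P)).2.2
    have hNPZ : (N : ℤ) = P * J := by exact_mod_cast hNP
    have hKPZ : (K : ℤ) = P * L := by exact_mod_cast hKP
    rw [h, hNPZ, hKPZ]
  -- The unique contributing row is the residue of `m - nK` modulo `N`.
  have hr0 := Int.emod_nonneg ((m : ℤ) - n * K) hNZ.ne'
  have hr1 := Int.emod_lt_of_pos ((m : ℤ) - n * K) hNZ
  have hdiv := Int.emod_add_mul_ediv ((m : ℤ) - n * K) N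
  let l₀ : Fin N := ⟨(((m : ℤ) - n * K) % N).toNat, by omega⟩
  have hl₀ : ((l₀ : ℕ) : ℤ) = ((m : ℤ) - n * K) % N := Int.toNat_of_nonneg hr0
  rw [Finset.sum_eq_single l₀]
  · have hd : (N : ℤ) ∣ (l₀ : ℤ) - m + n * K :=
      ⟨-(((m : ℤ) - n * K) / N), by linear_combination hl₀ + hdiv⟩
    obtain ⟨h1, h2⟩ := (key l₀).2 hd
    rw [if_pos h1, if_pos h2, mul_comm]
    obtain ⟨t, ht⟩ := hd
    congr 1
    · rw [Complex.exp_eq_exp_iff_exists_int]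
      refine ⟨k * t, ?_⟩
      have htC : ((l₀ : ℕ) : ℂ) - ((m : ℕ) : ℂ) + n * K = N * t := by exact_mod_cast ht
      push_cast
      field_simp
      linear_combination ((k : ℕ) : ℂ) * htC
    · congr 1
      have h3 := Int.ediv_mul_cancel h2
      have hMZ : (M : ℤ) = J * K := by exact_mod_cast hMJ
      rw [hMZ]
      linear_combination -(K : ℤ) * h3
  · intro l _ hne
    rw [← ite_and, if_neg, mul_zero]
    rw [key l]
    intro hd
    apply hne
    apply Fin.ext
    have hmod : (l : ℤ) % N = ((m : ℤ) - n * K) % N :=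
      Int.emod_eq_emod_iff_emod_sub_eq_zero.2
        (Int.emod_eq_zero_of_dvd (by convert hd using 1; ring))
    rw [Int.emod_eq_of_lt (by positivity) (by exact_mod_cast l.isLt), ← hl₀] at hmod
    exact_mod_cast hmod
  · simp
end
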